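/- arXiv:2411.11404 — 7 statements merged into one kernel-verified Lean document; each statement's English description precedes it below -/
import Mathlib

section
/- For every integer t ≥ 1 and every integer N ≥ 0, MO(−2, t; N) ≡ MO(0, t; N) (mod 2) and MO(0, t; N) ≡ MO(2, t; N) (mod 2). -/
/-!
All three sums run over the same pairs `(k, n)`, and they agree modulo 2 term by term.

* Binomial factor: `cm2 n t` is congruent to `C(n+t, 2t)`, and Lucas's theorem for the prime 2
  gives `C(n+t, 2t) ≡ C(⌊(n+t)/2⌋, t)` (`choose_two_mul_cast`), the last binary digit of `2t`
  being 0.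
* Partition factor: `p3 k ≡ pod k` (`p3_cast_eq_pod_cast`). Over `ZMod 2` write
  `Q = ∏ (1 - X^i)` and `E = ∏ (1 - X^(2i))`. Squaring is additive in characteristic 2, so
  `E = Q^2`. The generating function of `pod` is
  `G = ∏_{i odd} (1 + X^i) * ∏_{i even} (1 - X^i)⁻¹`, so `G * E * E = Q`, as
  `1 + X^i = 1 - X^i`. Hence `G * Q^4 = Q`, and multiplying by the fourth power of the partition
  generating function `P = Q⁻¹` yields `G = P^3`, the generating function of `p3`.
-/

open Finset

noncomputable section

/-- `p(k)`: the number of integer partitions of `k`. -/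
def numPartitions (k : ℕ) : ℕ := Nat.card (Nat.Partition k)

/-- `pod(k)`: the number of partitions of `k` in which the odd parts are distinct
(even parts may repeat). -/
def pod (k : ℕ) : ℕ :=
  Nat.card {p : Nat.Partition k // ∀ i ∈ p.parts, Odd i → p.parts.count i ≤ 1}

/-- `p₋₃(k)`: the number of 3-colored partitions of `k`, i.e. ordered triples
`(λ₁, λ₂, λ₃)` of partitions with `|λ₁| + |λ₂| + |λ₃| = k`. -/
def p3 (k : ℕ) : ℕ :=
  Nat.card {x : (Σ a : ℕ, Nat.Partition a) × (Σ a : ℕ, Nat.Partition a) ×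
      (Σ a : ℕ, Nat.Partition a) // x.1.1 + x.2.1.1 + x.2.2.1 = k}

/-- `c1(n, t) = ∑_{k=0}^{n} (−1)^{n+k} (C(n+k+1, 2k+1) + C(n+k, 2k+1)) C(k, t) 3^{k−t}`
(for `k < t` the binomial `C(k, t)` vanishes, so the truncated exponent `k - t` is harmless). -/
def c1 (n t : ℕ) : ℤ :=
  ∑ k ∈ Finset.range (n + 1),
    (-1 : ℤ) ^ (n + k) *
      (((n + k + 1).choose (2 * k + 1) : ℤ) + ((n + k).choose (2 * k + 1) : ℤ)) *
      (k.choose t : ℤ) * 3 ^ (k - t)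

/-- `cm1(n, t) = ∑_{k=0}^{n} (−1)^{n+k} (C(n+k+1, 2k+1) + C(n+k, 2k+1)) C(k, t)`. -/
def cm1 (n t : ℕ) : ℤ :=
  ∑ k ∈ Finset.range (n + 1),
    (-1 : ℤ) ^ (n + k) *
      (((n + k + 1).choose (2 * k + 1) : ℤ) + ((n + k).choose (2 * k + 1) : ℤ)) *
      (k.choose t : ℤ)

/-- `cm2(n, t) = (−1)^{n+t} (C(n+t, 2t) + 2 C(n+t, 2t+1))`. -/
def cm2 (n t : ℕ) : ℤ :=
  (-1 : ℤ) ^ (n + t) * (((n + t).choose (2 * t) : ℤ) + 2 * ((n + t).choose (2 * t + 1) : ℤ))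

/-- `c0(n, t) = (−1)^{n+⌊(n+t)/2⌋} C(⌊(n+t)/2⌋, t)`. -/
def c0 (n t : ℕ) : ℤ :=
  (-1 : ℤ) ^ (n + (n + t) / 2) * (((n + t) / 2).choose t : ℤ)

/-- `MO(1, t; N) = ∑ p(k) · c1(n, t)`, summed over all pairs of nonnegative integers
`(k, n)` with `3k + n(n+1)/2 = N` (all such pairs satisfy `k ≤ N` and `n ≤ N`). -/
def MO1 (t N : ℕ) : ℤ :=
  ∑ kn ∈ (Finset.range (N + 1) ×ˢ Finset.range (N + 1)).filter
      (fun kn => 3 * kn.1 + kn.2 * (kn.2 + 1) / 2 = N),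
    (numPartitions kn.1 : ℤ) * c1 kn.2 t

/-- `MO(−1, t; N) = ∑ B̄₃(k) · cm1(n, t)`, summed over all pairs of nonnegative integers
`(k, n)` with `k + n(n+1)/2 = N`, where `B3` is the coefficient function of
`f₂ f₃ / (f₁² f₆)`. -/
def MOm1 (B3 : ℕ → ℤ) (t N : ℕ) : ℤ :=
  ∑ kn ∈ (Finset.range (N + 1) ×ˢ Finset.range (N + 1)).filter
      (fun kn => kn.1 + kn.2 * (kn.2 + 1) / 2 = N),
    B3 kn.1 * cm1 kn.2 t

/-- `MO(2, t; N) = ∑ (−1)^k pod(k) · C(n+t, 2t)`, summed over all pairs of nonnegative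
integers `(k, n)` with `k + n(n+1)/2 = N`. -/
def MO2 (t N : ℕ) : ℤ :=
  ∑ kn ∈ (Finset.range (N + 1) ×ˢ Finset.range (N + 1)).filter
      (fun kn => kn.1 + kn.2 * (kn.2 + 1) / 2 = N),
    (-1 : ℤ) ^ kn.1 * (pod kn.1 : ℤ) * ((kn.2 + t).choose (2 * t) : ℤ)

/-- `MO(−2, t; N) = ∑ p₋₃(k) · cm2(n, t)`, summed over all pairs of nonnegative
integers `(k, n)` with `k + n(n+1)/2 = N`. -/
def MOm2 (t N : ℕ) : ℤ :=
  ∑ kn ∈ (Finset.range (N + 1) ×ˢ Finset.range (N + 1)).filter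
      (fun kn => kn.1 + kn.2 * (kn.2 + 1) / 2 = N),
    (p3 kn.1 : ℤ) * cm2 kn.2 t

/-- `MO(0, t; N) = ∑ pod(k) · c0(n, t)`, summed over all pairs of nonnegative
integers `(k, n)` with `k + n(n+1)/2 = N`. -/
def MO0 (t N : ℕ) : ℤ :=
  ∑ kn ∈ (Finset.range (N + 1) ×ˢ Finset.range (N + 1)).filter
      (fun kn => kn.1 + kn.2 * (kn.2 + 1) / 2 = N),
    (pod kn.1 : ℤ) * c0 kn.2 t

section Aux

open PowerSeries
open scoped PowerSeries.WithPiTopology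

lemma two_eq_zero_powerSeries : (2 : (ZMod 2)⟦X⟧) = 0 := by
  have h : (2 : ZMod 2) = 0 := CharTwo.two_eq_zero
  rw [← map_ofNat (C (R := ZMod 2)) 2, h, map_zero]

/-- The number of pairs of total size `k` is the convolution of the numbers of components of each
size. -/
lemma card_pairs_eq_sum {α β : Type*} (a : α → ℕ) (b : β → ℕ)
    (ha : ∀ i, Finite {x : α // a x = i}) (hb : ∀ i, Finite {x : β // b x = i}) (k : ℕ) :
    Finite {x : α × β // a x.1 + b x.2 = k} ∧
    Nat.card {x : α × β // a x.1 + b x.2 = k} =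
      ∑ ij ∈ antidiagonal k,
        Nat.card {x : α // a x = ij.1} * Nat.card {x : β // b x = ij.2} := by
  let e : {x : α × β // a x.1 + b x.2 = k} ≃
      Σ ij : antidiagonal k, {x : α // a x = ij.1.1} × {x : β // b x = ij.1.2} :=
    { toFun := fun x => ⟨⟨(a x.1.1, b x.1.2), mem_antidiagonal.mpr x.2⟩, ⟨x.1.1, rfl⟩, ⟨x.1.2, rfl⟩⟩
      invFun := fun y => ⟨(y.2.1.1, y.2.2.1), by
        rw [y.2.1.2, y.2.2.2]; exact mem_antidiagonal.mp y.1.2⟩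
      left_inv := fun x => rfl
      right_inv := by
        rintro ⟨⟨⟨i, j⟩, h⟩, ⟨x, hx⟩, ⟨y, hy⟩⟩
        dsimp only at hx hy
        subst hx hy
        rfl }
  refine ⟨Finite.of_equiv _ e.symm, ?_⟩
  rw [Nat.card_congr e, Nat.card_sigma, ← Finset.sum_coe_sort (antidiagonal k)]
  simp [Nat.card_prod]

/-- The fibre of the size map over `i` is the set of partitions of `i`. -/
def fiberEquiv (i : ℕ) : {x : Σ a : ℕ, Nat.Partition a // x.1 = i} ≃ Nat.Partition i :=
  Equiv.sigmaSubtype i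

/-- The generating function of the partition numbers over `ZMod 2`. -/
def partSeries : (ZMod 2)⟦X⟧ := PowerSeries.mk fun n => (numPartitions n : ZMod 2)

lemma coeff_partSeries_pow_three (k : ℕ) : (partSeries ^ 3).coeff k = (p3 k : ZMod 2) := by
  have hfin (i : ℕ) : Finite {x : Σ a : ℕ, Nat.Partition a // x.1 = i} :=
    Finite.of_equiv _ (fiberEquiv i).symm
  have hcard (i : ℕ) : Nat.card {x : Σ a : ℕ, Nat.Partition a // x.1 = i} = numPartitions i :=
    Nat.card_congr (fiberEquiv i)
  have h2 := card_pairs_eq_sum (fun x : Σ a : ℕ, Nat.Partition a => x.1)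
    (fun x : Σ a : ℕ, Nat.Partition a => x.1) hfin hfin
  have h3 := (card_pairs_eq_sum (fun x : Σ a : ℕ, Nat.Partition a => x.1)
    (fun y : (Σ a : ℕ, Nat.Partition a) × (Σ a : ℕ, Nat.Partition a) => y.1.1 + y.2.1)
    hfin (fun i => (h2 i).1) k).2
  have hp : p3 k = ∑ ij ∈ antidiagonal k, numPartitions ij.1 *
      ∑ ab ∈ antidiagonal ij.2, numPartitions ab.1 * numPartitions ab.2 := by
    simp only [p3, add_assoc]
    rw [h3]
    refine Finset.sum_congr rfl fun ij _ => ?_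
    rw [hcard, (h2 ij.2).2]
    simp only [hcard]
  rw [pow_succ', pow_two, coeff_mul, hp]
  simp [coeff_mul, partSeries]

/-- The generating function of `pod` over `ZMod 2`. -/
def podSeries : (ZMod 2)⟦X⟧ := PowerSeries.mk fun n => (pod n : ZMod 2)

/-- The weight that kills repeated odd parts cuts out exactly the partitions counted by `pod`. -/
lemma podSeries_eq_genFun :
    podSeries = Nat.Partition.genFun (fun i c => if Odd i ∧ 1 < c then (0 : ZMod 2) else 1) := by
  ext n
  rw [Nat.Partition.coeff_genFun]
  have h (p : n.Partition) :
      p.parts.toFinsupp.prod (fun i c => if Odd i ∧ 1 < c then (0 : ZMod 2) else 1) =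
        if ∀ i ∈ p.parts, Odd i → p.parts.count i ≤ 1 then 1 else 0 := by
    rw [Finsupp.prod]
    simp only [Multiset.toFinsupp_support, Multiset.toFinsupp_apply]
    split_ifs with hp
    · refine Finset.prod_eq_one fun i hi => if_neg ?_
      rintro ⟨ho, hc⟩
      exact absurd (hp i (Multiset.mem_toFinset.mp hi) ho) (by omega)
    · push Not at hp
      obtain ⟨i, hi, ho, hc⟩ := hp
      exact Finset.prod_eq_zero (Multiset.mem_toFinset.mpr hi) (if_pos ⟨ho, hc⟩)
  simp_rw [h]
  rw [Finset.sum_boole, podSeries, coeff_mk, pod, Nat.card_eq_fintype_card, Fintype.card_subtype]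

section Products

local instance : TopologicalSpace (ZMod 2) := ⊥
local instance : DiscreteTopology (ZMod 2) := ⟨rfl⟩

/-- Euler's product `∏ (1 - X^i)` over `ZMod 2`. -/
def eulerSeries : (ZMod 2)⟦X⟧ := ∏' i : ℕ, (1 - X ^ (i + 1))

lemma hasProd_eulerSeries :
    HasProd (fun i : ℕ => (1 - X ^ (i + 1) : (ZMod 2)⟦X⟧)) eulerSeries :=
  (WithPiTopology.multipliable_one_sub_X_pow _).hasProd

lemma partSeries_mul_eulerSeries : partSeries * eulerSeries = 1 := by
  have h := Nat.Partition.hasProd_powerSeriesMk_card_restricted (ZMod 2) (fun _ => True)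
  have hP : (PowerSeries.mk fun n => (#(Nat.Partition.restricted n fun _ => True) : ZMod 2)) =
      partSeries := by
    ext n
    simp [partSeries, Nat.Partition.restricted, numPartitions, Finset.card_univ]
  rw [hP] at h
  have h1 := h.mul hasProd_eulerSeries
  refine h1.unique ?_
  convert! hasProd_one using 2 with i
  simp_rw [if_true, pow_mul]
  exact WithPiTopology.tsum_pow_mul_one_sub_of_constantCoeff_eq_zero (by simp)

/-- Frobenius: `∏ (1 - X^i)` over even `i` is the square of the product over all `i`. -/
lemma hasProd_even :
    HasProd (fun i : ℕ => if Even (i + 1) then (1 - X ^ (i + 1) : (ZMod 2)⟦X⟧) else 1)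
      (eulerSeries ^ 2) := by
  have hinj : Function.Injective (fun i : ℕ => 2 * i + 1) := fun a b h => by
    simpa using h
  rw [← hinj.hasProd_iff]
  · have h := hasProd_eulerSeries.mul hasProd_eulerSeries
    rw [pow_two]
    convert! h using 2 with i
    have he : Even (2 * i + 1 + 1) := ⟨i + 1, by ring⟩
    simp only [Function.comp, if_pos he]
    linear_combination (X ^ (i + 1) - X ^ (2 * i + 1 + 1)) * two_eq_zero_powerSeries
  · intro x hx
    refine if_neg fun ⟨m, hm⟩ => hx ⟨m - 1, ?_⟩
    dsimp only
    omega

lemma podSeries_mul : podSeries * eulerSeries ^ 2 * eulerSeries ^ 2 = eulerSeries := by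
  have h := Nat.Partition.hasProd_genFun
    (fun i c => if Odd i ∧ 1 < c then (0 : ZMod 2) else 1)
  rw [← podSeries_eq_genFun] at h
  refine ((h.mul hasProd_even).mul hasProd_even).unique ?_
  convert! hasProd_eulerSeries using 2 with i
  rcases Nat.even_or_odd (i + 1) with he | ho
  · have hno : ¬ Odd (i + 1) := Nat.not_odd_iff_even.mpr he
    -- The factor of `G` at an even part is a full geometric series.
    have hs : (1 + ∑' j : ℕ, X ^ ((i + 1) * (j + 1)) : (ZMod 2)⟦X⟧) * (1 - X ^ (i + 1)) = 1 := by
      have hc : ((X : (ZMod 2)⟦X⟧) ^ (i + 1)).constantCoeff = 0 := by simp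
      have hg := WithPiTopology.tsum_pow_mul_one_sub_of_constantCoeff_eq_zero hc
      rw [(WithPiTopology.summable_pow_of_constantCoeff_eq_zero hc).tsum_eq_zero_add,
        pow_zero] at hg
      simpa only [pow_mul] using hg
    simp only [hno, he, false_and, if_false, if_true, one_smul, hs, one_mul]
  · have hne : ¬ Even (i + 1) := Nat.not_even_iff_odd.mpr ho
    -- At an odd part only the multiplicities 0 and 1 survive.
    rw [tsum_eq_single 0 (fun j hj => by simp [ho, Nat.pos_of_ne_zero hj])]
    simp only [hne, zero_add, lt_irrefl, and_false, if_false, one_smul, mul_one]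
    linear_combination X ^ (i + 1) * two_eq_zero_powerSeries

lemma podSeries_eq : podSeries = partSeries ^ 3 := by
  have h1 := partSeries_mul_eulerSeries
  calc podSeries = podSeries * (partSeries * eulerSeries) ^ 4 := by rw [h1]; ring
    _ = podSeries * eulerSeries ^ 2 * eulerSeries ^ 2 * partSeries ^ 4 := by ring
    _ = partSeries ^ 3 * (partSeries * eulerSeries) := by rw [podSeries_mul]; ring
    _ = partSeries ^ 3 := by rw [h1, mul_one]

end Products

lemma p3_cast_eq_pod_cast (k : ℕ) : (p3 k : ZMod 2) = (pod k : ZMod 2) := by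
  rw [← coeff_partSeries_pow_three, ← podSeries_eq, podSeries, coeff_mk]

lemma choose_two_mul_cast (m t : ℕ) :
    ((m.choose (2 * t) : ℕ) : ZMod 2) = ((m / 2).choose t : ℕ) := by
  have h := Choose.choose_modEq_choose_mod_mul_choose_div_nat (n := m) (k := 2 * t) (p := 2)
  rw [Nat.mul_mod_right, Nat.choose_zero_right, one_mul,
    Nat.mul_div_cancel_left t two_pos] at h
  exact (ZMod.natCast_eq_natCast_iff _ _ _).mpr h

end Aux

theorem stmt1 (t : ℕ) (ht : 1 ≤ t) (N : ℕ) :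
    MOm2 t N ≡ MO0 t N [ZMOD 2] ∧ MO0 t N ≡ MO2 t N [ZMOD 2] := by
  have h2 : (2 : ZMod 2) = 0 := CharTwo.two_eq_zero
  have hneg : (-1 : ZMod 2) = 1 := by decide
  refine ⟨(ZMod.intCast_eq_intCast_iff _ _ 2).mp ?_, (ZMod.intCast_eq_intCast_iff _ _ 2).mp ?_⟩
  · rw [MOm2, MO0, Int.cast_sum, Int.cast_sum]
    refine Finset.sum_congr rfl fun kn _ => ?_
    simp [cm2, c0, hneg, h2, p3_cast_eq_pod_cast, choose_two_mul_cast]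
  · rw [MO0, MO2, Int.cast_sum, Int.cast_sum]
    refine Finset.sum_congr rfl fun kn _ => ?_
    simp [c0, hneg, choose_two_mul_cast]
end
end

section
/- For all integers J ≥ 0 and N ≥ 0, MO(1, 3J+3; 3N+1) ≡ 0 (mod 3) and MO(1, 3J+2; 3N+1) ≡ 0 (mod 3). -/
/-!
Modulo 3 only the term `k = t` of `c1 n t` survives, because of the factor `3 ^ (k - t)`; hence
`c1 n t ≡ ± (C(n + t + 1, 2t + 1) + C(n + t, 2t + 1))`. If `3k + n(n+1)/2 = 3N + 1`, then
`n(n+1)/2 ≡ 1 (mod 3)`, which forces `n ≡ 1 (mod 3)`. For such `n` and `t ≡ 0` or `2 (mod 3)`,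
Lucas' theorem shows that the sum of the two binomials is divisible by 3, so every summand of
`MO1` is; nothing about the partition numbers is needed.
-/

open Finset

noncomputable section

/-- One step of Lucas' theorem at the prime 3, with the last ternary digits made explicit. -/
lemma lucas_three (a b r s : ℕ) (hr : r < 3) (hs : s < 3) :
    ((3 * a + r).choose (3 * b + s) : ℤ) ≡ (r.choose s : ℤ) * (a.choose b : ℤ) [ZMOD 3] := by
  have : Fact (Nat.Prime 3) := ⟨Nat.prime_three⟩
  have h := Choose.choose_modEq_choose_mod_mul_choose_div (n := 3 * a + r) (k := 3 * b + s) (p := 3)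
  rw [show (3 * a + r) % 3 = r by omega, show (3 * b + s) % 3 = s by omega,
    show (3 * a + r) / 3 = a by omega, show (3 * b + s) / 3 = b by omega] at h
  exact_mod_cast h

lemma three_dvd_c1 (n t : ℕ)
    (h : (3 : ℤ) ∣ ((n + t + 1).choose (2 * t + 1) : ℤ) + ((n + t).choose (2 * t + 1) : ℤ)) :
    (3 : ℤ) ∣ c1 n t := by
  refine Finset.dvd_sum fun k _ => ?_
  rcases lt_trichotomy k t with hk | rfl | hk
  · simp [Nat.choose_eq_zero_of_lt hk]
  · exact ((h.mul_left _).mul_right _).mul_right _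
  · exact (dvd_pow_self 3 (by omega)).mul_left _

/-- A triangular number congruent to `1` modulo 3 has index congruent to `1` modulo 3. -/
lemma mod_three_of_triangular {k n N : ℕ} (h : 3 * k + n * (n + 1) / 2 = 3 * N + 1) :
    n % 3 = 1 := by
  have h2 := Nat.div_mul_cancel (Nat.even_mul_succ_self n).two_dvd
  have h3 : n * (n + 1) % 3 = 2 := by omega
  have h4 : n % 3 < 3 := Nat.mod_lt _ (by norm_num)
  rw [Nat.mul_mod, Nat.add_mod] at h3
  interval_cases n % 3 <;> simp_all

lemma three_dvd_MO1 (t N : ℕ)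
    (h : ∀ m : ℕ, (3 : ℤ) ∣ ((3 * m + 1 + t + 1).choose (2 * t + 1) : ℤ) +
      ((3 * m + 1 + t).choose (2 * t + 1) : ℤ)) :
    (3 : ℤ) ∣ MO1 t (3 * N + 1) := by
  refine Finset.dvd_sum fun kn hkn => ?_
  have hn := mod_three_of_triangular (Finset.mem_filter.1 hkn).2
  refine (three_dvd_c1 _ _ ?_).mul_left _
  rw [show kn.2 = 3 * (kn.2 / 3) + 1 by omega]
  exact h _

theorem stmt3 (J N : ℕ) :
    (3 : ℤ) ∣ MO1 (3 * J + 3) (3 * N + 1) ∧ (3 : ℤ) ∣ MO1 (3 * J + 2) (3 * N + 1) := by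
  constructor
  · apply three_dvd_MO1
    intro m
    -- The top digits agree and the bottom digits give `C(2, 1) + C(1, 1) = 3`.
    have h1 := lucas_three (m + J + 1) (2 * J + 2) 2 1 (by norm_num) (by norm_num)
    have h2 := lucas_three (m + J + 1) (2 * J + 2) 1 1 (by norm_num) (by norm_num)
    rw [show 3 * m + 1 + (3 * J + 3) + 1 = 3 * (m + J + 1) + 2 by ring,
      show 3 * m + 1 + (3 * J + 3) = 3 * (m + J + 1) + 1 by ring,
      show 2 * (3 * J + 3) + 1 = 3 * (2 * J + 2) + 1 by ring]
    rw [show Nat.choose 2 1 = 2 from rfl, Int.ModEq] at h1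
    rw [show Nat.choose 1 1 = 1 from rfl, Int.ModEq] at h2
    omega
  · apply three_dvd_MO1
    intro m
    -- Both binomials vanish modulo 3, since `C(1, 2) = C(0, 2) = 0`.
    have h1 := lucas_three (m + J + 1) (2 * J + 1) 1 2 (by norm_num) (by norm_num)
    have h2 := lucas_three (m + J + 1) (2 * J + 1) 0 2 (by norm_num) (by norm_num)
    rw [show 3 * m + 1 + (3 * J + 2) + 1 = 3 * (m + J + 1) + 1 by ring,
      show 3 * m + 1 + (3 * J + 2) = 3 * (m + J + 1) + 0 by ring,
      show 2 * (3 * J + 2) + 1 = 3 * (2 * J + 1) + 2 by ring]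
    rw [show Nat.choose 1 2 = 0 from rfl, Int.ModEq] at h1
    rw [show Nat.choose 0 2 = 0 from rfl, Int.ModEq] at h2
    omega
end
end

section
/- For all integers J ≥ 0 and N ≥ 0, MO(1, 3J+2; 3N+1) ≡ 0 (mod 9). -/
/-!
Put `P_n(x) = ∑_t c1(n, t) x^t = A_n(x + 3)`, where
`A_n(X) = ∑_k (-1)^{n+k} (C(n+k+1, 2k+1) + C(n+k, 2k+1)) X^k`. The `A_n` are Chebyshev-like:
for `X - 2 = w² + w⁻²` one has `A_n(X) = (w^{2n+1} + w^{-(2n+1)}) / (w + w⁻¹)`. Algebraically this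
is the recurrence `P_{n+2} = (x + 1) P_{n+1} - P_n` (`genPoly_rec`), and tripling it gives
`P_{n+6} = (x³ + 3x² - 2) P_{n+3} - P_n`.

A triangular number is `1` modulo `3` only if its index is `1` modulo `3`, so only
`n = 3m + 1` contributes to `MO1 t (3N + 1)`. As `P_1 = x` and `P_4 = x (x³ + 3x² - 3)`, every
`P_{3m+1}` is `x` times an integer polynomial in `x³ + 3x² = x² (x + 3)`. In such a product the
coefficients of `x^{3J}` are divisible by `3` and those of `x^{3J+2}` by `9`, because both
conditions survive multiplication by `x³ + 3x²`. The congruence therefore holds term by term.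
-/

open Finset

noncomputable section

open Polynomial

/-- The coefficient of `X^k` in `A_n`. -/
def aCoeff (n k : ℕ) : ℤ :=
  (-1 : ℤ) ^ (n + k) *
    (((n + k + 1).choose (2 * k + 1) : ℤ) + ((n + k).choose (2 * k + 1) : ℤ))

lemma aCoeff_eq_zero {n k : ℕ} (h : n < k) : aCoeff n k = 0 := by
  unfold aCoeff
  rw [Nat.choose_eq_zero_of_lt (by omega), Nat.choose_eq_zero_of_lt (by omega)]
  simp

lemma aCoeff_rec_zero (n : ℕ) :
    aCoeff (n + 2) 0 = -2 * aCoeff (n + 1) 0 - aCoeff n 0 := by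
  simp only [aCoeff, Nat.add_zero, Nat.mul_zero, Nat.zero_add, Nat.choose_one_right]
  push_cast
  ring

lemma choose_second_diff (M j : ℕ) :
    ((M + 2).choose (j + 2) : ℤ) =
      M.choose j + 2 * (M + 1).choose (j + 2) - M.choose (j + 2) := by
  have h1 := Nat.choose_succ_succ' (M + 1) (j + 1)
  have h2 := Nat.choose_succ_succ' M j
  have h3 := Nat.choose_succ_succ' M (j + 1)
  have e : j + 1 + 1 = j + 2 := rfl
  have e' : M + 1 + 1 = M + 2 := rfl
  rw [e, e'] at h1
  rw [e] at h3
  omega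

lemma aCoeff_rec_succ (n k : ℕ) :
    aCoeff (n + 2) (k + 1) =
      aCoeff (n + 1) k - 2 * aCoeff (n + 1) (k + 1) - aCoeff n (k + 1) := by
  have h1 : ((n + k + 1 + 2 + 1).choose (2 * k + 1 + 2) : ℤ) =
      (n + k + 1 + 1).choose (2 * k + 1) + 2 * (n + k + 1 + 1 + 1).choose (2 * k + 1 + 2) -
        (n + k + 1 + 1).choose (2 * k + 1 + 2) :=
    choose_second_diff (n + k + 1 + 1) (2 * k + 1)
  have h2 := choose_second_diff (n + k + 1) (2 * k + 1)
  simp only [aCoeff,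
    show n + 2 + (k + 1) = n + k + 1 + 2 by omega,
    show n + 1 + (k + 1) = n + k + 1 + 1 by omega,
    show n + 1 + k = n + k + 1 by omega,
    show n + (k + 1) = n + k + 1 by omega,
    show 2 * (k + 1) + 1 = 2 * k + 1 + 2 by omega]
  rw [h1, h2]
  ring

/-- The generating polynomial `P_n(x) = A_n(x + 3) = ∑_t c1(n, t) x^t`. -/
def genPoly (n : ℕ) : ℤ[X] :=
  ∑ k ∈ range (n + 1), C (aCoeff n k) * (X + C 3) ^ k

lemma genPoly_coeff (n t : ℕ) : (genPoly n).coeff t = c1 n t := by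
  simp only [genPoly, c1, finsetSum_coeff, coeff_C_mul, coeff_X_add_C_pow, aCoeff]
  exact sum_congr rfl fun k _ => by ring

lemma genPoly_eq_sum {n L : ℕ} (h : n + 1 ≤ L) :
    genPoly n = ∑ k ∈ range L, C (aCoeff n k) * (X + C 3) ^ k := by
  refine sum_subset (range_mono h) fun k _ hk => ?_
  rw [aCoeff_eq_zero (by simpa using hk)]
  simp

lemma genPoly_rec (n : ℕ) :
    genPoly (n + 2) = (X + 1) * genPoly (n + 1) - genPoly n := by
  have h1 : genPoly (n + 1) * (X + C 3) =
      ∑ k ∈ range (n + 2), C (aCoeff (n + 1) k) * (X + C 3) ^ (k + 1) := by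
    rw [genPoly, sum_mul]
    exact sum_congr rfl fun k _ => by ring
  have h2 := genPoly_eq_sum (n := n + 1) (L := n + 2 + 1) (by omega)
  have h3 := genPoly_eq_sum (n := n) (L := n + 2 + 1) (by omega)
  have h4 : genPoly (n + 2) =
      genPoly (n + 1) * (X + C 3) - 2 * genPoly (n + 1) - genPoly n := by
    rw [h1, h2, h3, genPoly]
    simp only [sum_range_succ' _ (n + 2), aCoeff_rec_succ, aCoeff_rec_zero, mul_add, mul_sum]
    simp only [map_sub, map_mul, map_neg, sub_mul, sum_sub_distrib, ← mul_assoc]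
    simp only [map_ofNat]
    ring
  rw [h4, show (C 3 : ℤ[X]) = 3 from map_ofNat C 3]
  ring

lemma genPoly_rec_three (n : ℕ) :
    genPoly (n + 6) = (X ^ 3 + 3 * X ^ 2 - 2) * genPoly (n + 3) - genPoly n := by
  have h2 := genPoly_rec n
  have h3 := genPoly_rec (n + 1)
  have h4 := genPoly_rec (n + 2)
  have h5 := genPoly_rec (n + 3)
  have h6 := genPoly_rec (n + 4)
  simp only [add_assoc, Nat.reduceAdd] at h2 h3 h4 h5 h6
  rw [h6, h5, h4, h3, h2]
  ring

/-- The coefficients of `x^{3J}` are divisible by `3`, those of `x^{3J+2}` by `9`. -/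
def CoeffDvd (f : ℤ[X]) : Prop :=
  ∀ J, 3 ∣ f.coeff (3 * J) ∧ 9 ∣ f.coeff (3 * J + 2)

lemma CoeffDvd.sub {f g : ℤ[X]} (hf : CoeffDvd f) (hg : CoeffDvd g) : CoeffDvd (f - g) :=
  fun J => by
    simp only [coeff_sub]
    exact ⟨dvd_sub (hf J).1 (hg J).1, dvd_sub (hf J).2 (hg J).2⟩

lemma CoeffDvd.mul {f : ℤ[X]} (hf : CoeffDvd f) :
    CoeffDvd ((X ^ 3 + 3 * X ^ 2 - 2) * f) := by
  have e : (X ^ 3 + 3 * X ^ 2 - 2) * f = f * X ^ 3 + C 3 * (f * X ^ 2) - C 2 * f := by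
    rw [show (C 3 : ℤ[X]) = 3 from map_ofNat C 3, show (C 2 : ℤ[X]) = 2 from map_ofNat C 2]
    ring
  rintro (_ | J)
  · have h := hf 0
    simp only [e, coeff_sub, coeff_add, coeff_C_mul, coeff_mul_X_pow']
    simp only [Nat.mul_zero, Nat.zero_add] at h ⊢
    norm_num
    omega
  · have h := hf J
    have h' := hf (J + 1)
    simp only [e, coeff_sub, coeff_add, coeff_C_mul, coeff_mul_X_pow',
      show 3 ≤ 3 * (J + 1) by omega, show 2 ≤ 3 * (J + 1) by omega,
      show 3 ≤ 3 * (J + 1) + 2 by omega, show 2 ≤ 3 * (J + 1) + 2 by omega, if_true,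
      show 3 * (J + 1) - 3 = 3 * J by omega, show 3 * (J + 1) + 2 - 3 = 3 * J + 2 by omega,
      show 3 * (J + 1) + 2 - 2 = 3 * (J + 1) by omega]
    omega

lemma genPoly_zero : genPoly 0 = 1 := by
  simp [genPoly, aCoeff]

lemma genPoly_one : genPoly 1 = X := by
  simp [genPoly, aCoeff, sum_range_succ, Nat.choose_succ_succ]
  norm_num

lemma genPoly_coeffDvd (m : ℕ) : CoeffDvd (genPoly (3 * m + 1)) := by
  have base : CoeffDvd (genPoly 1) := fun J => by
    rw [genPoly_one, coeff_X_of_ne_one (by omega), coeff_X_of_ne_one (by omega)]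
    simp
  -- Extending the recurrence backwards gives `P_{-1} = P_0` and `P_{-2} = P_1`, so
  -- `P_4 = (x³ + 3x² - 2) P_1 - P_1`.
  have four : genPoly 4 = (X ^ 3 + 3 * X ^ 2 - 2) * genPoly 1 - genPoly 1 := by
    rw [genPoly_rec 2, genPoly_rec 1, genPoly_rec 0, genPoly_zero, genPoly_one]
    ring
  induction m using Nat.twoStepInduction with
  | zero => exact base
  | one =>
    rw [show 3 * 1 + 1 = 4 by norm_num, four]
    exact base.mul.sub base
  | more m h1 h2 =>
    rw [show 3 * (m + 2) + 1 = 3 * m + 1 + 6 by ring, genPoly_rec_three]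
    exact CoeffDvd.mul (by simpa only [mul_add, mul_one, add_right_comm] using h2) |>.sub h1

/-- A triangular number congruent to `1` modulo `3` has index congruent to `1` modulo `3`. -/
lemma index_of_triangular {k n N : ℕ} (h : 3 * k + n * (n + 1) / 2 = 3 * N + 1) :
    ∃ m, n = 3 * m + 1 := by
  have hd : 2 ∣ n * (n + 1) := (Nat.even_mul_succ_self n).two_dvd
  refine ⟨n / 3, ?_⟩
  have hn := Nat.div_add_mod n 3
  have hr : n % 3 = 0 ∨ n % 3 = 1 ∨ n % 3 = 2 := by omega
  generalize n / 3 = m at *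
  rcases hr with hr | hr | hr
  · have : n * (n + 1) = 3 * (m * (n + 1)) := by rw [← mul_assoc]; congr 1; omega
    omega
  · omega
  · have : n * (n + 1) = 3 * (n * (m + 1)) := by
      rw [mul_left_comm]; congr 1; omega
    omega

theorem stmt4 (J N : ℕ) :
    (9 : ℤ) ∣ MO1 (3 * J + 2) (3 * N + 1) := by
  refine dvd_sum fun kn hkn => ?_
  obtain ⟨m, hm⟩ := index_of_triangular (mem_filter.mp hkn).2
  rw [hm, ← genPoly_coeff]
  exact (genPoly_coeffDvd m J).2.mul_left _
end
end

section
/- For all integers J ≥ 0 and N ≥ 0, MO(1, 5J+4; 5N+2) ≡ 0 (mod 5). -/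
/-!
Every single term `p(k) * c1 n (5 J + 4)` with `3 k + n (n + 1) / 2 = 5 N + 2` is divisible by 5.

The numbers `c1 n t` are the Taylor coefficients at `x = 3` of the shifted Chebyshev polynomial
`W n`, which satisfies the hypergeometric equation
`(4 x - x ^ 2) W'' + (6 - 2 x) W' + n (n + 1) W = 0` (`W_ode`). Expanding the equation at `x = 3`
gives a three-term recurrence in `t` (`c1_recurrence`), which for `t ≡ 4 (mod 5)` degenerates modulo
5 to `n (n + 1) c1 n t ≡ 0`. So `5 ∣ c1 n t` unless `5 ∣ n (n + 1)` (`dvd_c1`). In the remaining case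
`3 k ≡ 2 (mod 5)`, that is `k ≡ 4 (mod 5)`, and Ramanujan's congruence `5 ∣ p(5 m + 4)` applies
(`dvd_numPartitions`).

For Ramanujan's congruence let `f = ∏ (1 - q ^ n)`. Modulo 5, `1 / f = f ^ 4 / f ^ 5` and `f ^ 5` is
a series in `q ^ 5`, so it suffices that `f ^ 4` has no exponents `4` modulo 5. By the pentagonal
number theorem `f = A + B + C` with exponents `0`, `1`, `2` modulo 5 respectively, and the exponents
`4` of `f ^ 4` come from `A ^ 2 * C ^ 2 + 2 * A * B ^ 2 * C + B ^ 4 = (B ^ 2 + A * C) ^ 2` modulo 5.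
Finally `B ^ 2 + A * C = 0` (`part_relation`): its coefficients are signed counts of points `(X, Y)`
on circles, which cancel in pairs under a reflection with matrix entries `±3/5`, `±4/5`.
-/

open Finset

noncomputable section

/-! ### The polynomial of the `c1 n t` and its differential equation -/

/-- The coefficient of `x ^ k` in the polynomial `W n` below. -/
def wCoeff (n k : ℕ) : ℤ :=
  (-1 : ℤ) ^ (n + k) *
    (((n + k + 1).choose (2 * k + 1) : ℤ) + ((n + k).choose (2 * k + 1) : ℤ))

/-- The polynomial `W n = ∑ k, wCoeff n k * x ^ k` (a shifted Chebyshev polynomial of the third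
kind); by `c1_eq_coeff`, `c1 n t` is its `t`-th Taylor coefficient at `3`. -/
def W (n : ℕ) : Polynomial ℤ :=
  ∑ k ∈ Finset.range (n + 1), Polynomial.monomial k (wCoeff n k)

lemma coeff_W (n k : ℕ) : (W n).coeff k = wCoeff n k := by
  simp only [W, Polynomial.finsetSum_coeff, Polynomial.coeff_monomial, Finset.sum_ite_eq',
    Finset.mem_range]
  split_ifs with h
  · rfl
  · have h1 : (n + k + 1).choose (2 * k + 1) = 0 := Nat.choose_eq_zero_of_lt (by omega)
    have h2 : (n + k).choose (2 * k + 1) = 0 := Nat.choose_eq_zero_of_lt (by omega)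
    simp [wCoeff, h1, h2]

lemma c1_eq_coeff (n t : ℕ) : c1 n t = (Polynomial.taylor 3 (W n)).coeff t := by
  rw [Polynomial.taylor_coeff, W, map_sum, Polynomial.eval_finsetSum, c1]
  refine Finset.sum_congr rfl fun k _ => ?_
  rw [Polynomial.hasseDeriv_monomial, Polynomial.eval_monomial, wCoeff]
  ring

lemma choose_succ_right_int (m j : ℕ) :
    ((m.choose (j + 1) : ℤ)) * (j + 1) = m.choose j * (m - j) := by
  rcases le_or_gt j m with h | h
  · have := Nat.choose_succ_right_eq m j
    zify [h] at this
    exact this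
  · rw [Nat.choose_eq_zero_of_lt h, Nat.choose_eq_zero_of_lt (by omega : m < j + 1)]
    simp

lemma choose_succ_left_int (m j : ℕ) :
    (((m + 1).choose j : ℤ)) * (m + 1 - j) = m.choose j * (m + 1) := by
  rcases le_or_gt j (m + 1) with h | h
  · have := Nat.choose_mul_succ_eq m j
    zify [h] at this
    exact this.symm
  · rw [Nat.choose_eq_zero_of_lt h, Nat.choose_eq_zero_of_lt (by omega : m < j)]
    simp

/-- The hypergeometric recurrence of the coefficients; for `k = n` both sides vanish. -/
lemma wCoeff_succ (n k : ℕ) :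
    (k + 1) * (4 * k + 6) * wCoeff n (k + 1) = (k * (k + 1) - n * (n + 1)) * wCoeff n k := by
  have e1 := choose_succ_right_int (n + k + 2) (2 * k + 1)
  have e2 := choose_succ_right_int (n + k + 2) (2 * k + 2)
  have e3 := choose_succ_right_int (n + k + 1) (2 * k + 1)
  have e4 := choose_succ_right_int (n + k + 1) (2 * k + 2)
  have e5 := choose_succ_left_int (n + k + 1) (2 * k + 1)
  have e6 := choose_succ_left_int (n + k) (2 * k + 1)
  simp only [wCoeff, show n + (k + 1) = n + k + 1 by ring, show 2 * (k + 1) + 1 = 2 * k + 2 + 1 by ring]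
  push_cast at *
  generalize ((n + k + 2).choose (2 * k + 2 + 1) : ℤ) = a at *
  generalize ((n + k + 1).choose (2 * k + 2 + 1) : ℤ) = b at *
  simp only [show 2 * k + 1 + 1 = 2 * k + 2 by ring, show n + k + 1 + 1 = n + k + 2 by ring] at *
  generalize ((n + k + 2).choose (2 * k + 2) : ℤ) = c at *
  generalize ((n + k + 1).choose (2 * k + 2) : ℤ) = d at *
  generalize ((n + k + 2).choose (2 * k + 1) : ℤ) = e at *
  generalize ((n + k + 1).choose (2 * k + 1) : ℤ) = f at *
  generalize ((n + k).choose (2 * k + 1) : ℤ) = g at *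
  linear_combination (-1 : ℤ) ^ (n + k) * (-(2 * k + 2) * e2 - (n - k) * e1 - (2 * k + 2) * e4
    - (n - k - 1) * e3 - (n - k) * e5 - (n - k) * e6)

open Polynomial in
/-- The differential equation of `W n`, equivalent to the recurrence `wCoeff_succ`. -/
lemma W_ode (n : ℕ) :
    4 * (X * derivative (derivative (W n))) - X * (X * derivative (derivative (W n)))
      + 6 * derivative (W n) - 2 * (X * derivative (W n)) + C ((n : ℤ) * (n + 1)) * W n = 0 := by
  ext k
  have h4 : (4 : ℤ[X]) = C 4 := rfl
  have h6 : (6 : ℤ[X]) = C 6 := rfl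
  have h2 : (2 : ℤ[X]) = C 2 := rfl
  have h := wCoeff_succ n k
  rw [h4, h6, h2]
  rcases k with _ | _ | k <;>
  · simp only [coeff_add, coeff_sub, coeff_C_mul, coeff_X_mul, coeff_X_mul_zero, coeff_derivative,
      coeff_W, coeff_zero]
    push_cast at *
    linear_combination h

open Polynomial in
/-- The differential equation at the base point `3`, read off coefficientwise. -/
lemma c1_recurrence (n s : ℕ) :
    3 * (s + 4) * (s + 3) * c1 n (s + 4) - 2 * (s + 2) * (s + 3) * c1 n (s + 3)
      + (n * (n + 1) - (s + 2) * (s + 3)) * c1 n (s + 2) = 0 := by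
  have hd : ∀ p : ℤ[X], taylor 3 (derivative p) = derivative (taylor 3 p) := by
    intro p
    simp [taylor_apply, derivative_comp]
  have h := congrArg (taylor 3) (W_ode n)
  have h4 : (4 : ℤ[X]) = C 4 := rfl
  have h6 : (6 : ℤ[X]) = C 6 := rfl
  have h2 : (2 : ℤ[X]) = C 2 := rfl
  rw [h4, h6, h2] at h
  simp only [map_add, map_sub, map_zero, taylor_mul, taylor_C, taylor_X, hd] at h
  have h' := congrArg (fun p => coeff p (s + 2)) h
  simp only [add_mul, mul_add, coeff_add, coeff_sub, coeff_C_mul, coeff_X_mul, coeff_derivative,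
    ← c1_eq_coeff, coeff_zero] at h'
  push_cast at h'
  linear_combination h'

/-- In the recurrence `c1_recurrence` at `t = s + 2 = 5 * J + 4`, all terms but `n (n + 1) c1 n t`
carry the factor `t + 1 = 5 * (J + 1)`. -/
lemma dvd_c1 (n J : ℕ) (hn : ¬ 5 ∣ n * (n + 1)) : (5 : ℤ) ∣ c1 n (5 * J + 4) := by
  have h := c1_recurrence n (5 * J + 2)
  have h1 : (5 : ℤ) ∣ ((n * (n + 1) : ℕ) : ℤ) * c1 n (5 * J + 4) := by
    refine ⟨-(3 * (5 * J + 6) * (J + 1) * c1 n (5 * J + 6)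
      - 2 * (5 * J + 4) * (J + 1) * c1 n (5 * J + 5)
      - (5 * J + 4) * (J + 1) * c1 n (5 * J + 4)), ?_⟩
    push_cast at *
    linear_combination h
  rcases Int.Prime.dvd_mul' (by norm_num : Nat.Prime 5) h1 with h2 | h2
  · exact absurd (by exact_mod_cast h2) hn
  · exact h2

/-! ### Ramanujan's congruence modulo 5 -/

/-- All pairs `(k, l)` of integers with `pentagonal k + pentagonal l = n`; the box is large enough
because `|k| ≤ pentagonal k`. -/
def pentPairs (n : ℕ) : Finset (ℤ × ℤ) :=
  (Finset.Icc (-n : ℤ) n ×ˢ Finset.Icc (-n : ℤ) n).filter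
    fun p => pentagonal p.1 + pentagonal p.2 = n

lemma abs_le_pentagonal (k : ℤ) : |k| ≤ pentagonal k := by
  have h := two_mul_natCast_pentagonal k
  rcases le_or_gt k 0 with hk | hk
  · rw [abs_of_nonpos hk]; nlinarith
  · rw [abs_of_pos hk]; nlinarith

lemma mem_pentPairs {n : ℕ} {p : ℤ × ℤ} :
    p ∈ pentPairs n ↔ pentagonal p.1 + pentagonal p.2 = n := by
  simp only [pentPairs, Finset.mem_filter, Finset.mem_product, Finset.mem_Icc,
    and_iff_right_iff_imp]
  intro h
  have h1 := abs_le.1 (abs_le_pentagonal p.1)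
  have h2 := abs_le.1 (abs_le_pentagonal p.2)
  omega

/-- The sign `(-1) ^ k` as an element of `ZMod 5`. -/
def sg (k : ℤ) : ZMod 5 := ((Int.negOnePow k : ℤˣ) : ℤ)

/-- Euler's product `∏ (1 - q ^ n)` modulo 5, taken in its expanded form, the pentagonal number
series. -/
def euler : PowerSeries (ZMod 5) := PowerSeries.pentagonalSeries (ZMod 5)

/-- The part of `euler` supported on exponents congruent to `r` modulo 5. -/
def part (r : ℕ) : PowerSeries (ZMod 5) :=
  PowerSeries.mk fun n => if n % 5 = r then PowerSeries.coeff n euler else 0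

lemma coeff_euler {n i : ℕ} (hi : i ≤ n) :
    PowerSeries.coeff i euler =
      ∑ k ∈ Finset.Icc (-n : ℤ) n, if pentagonal k = i then sg k else 0 := by
  by_cases h : i ∈ Set.range pentagonal
  · obtain ⟨k, rfl⟩ := h
    have hk := abs_le.1 (abs_le_pentagonal k)
    simp only [pentagonal_inj]
    rw [Finset.sum_ite_eq', if_pos (by rw [Finset.mem_Icc]; omega), euler,
      PowerSeries.coeff_pentagonalSeries_pentagonal, sg]
  · rw [euler, PowerSeries.coeff_pentagonalSeries_eq_zero _ h]
    symm
    refine Finset.sum_eq_zero fun k _ => if_neg fun hk => h ⟨k, hk⟩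

/-- The coefficient of `q ^ n` in a product of two parts is a signed count of pairs of pentagonal
indices. -/
lemma coeff_part_mul (n r s : ℕ) :
    PowerSeries.coeff n (part r * part s) =
      ∑ p ∈ (pentPairs n).filter fun p => pentagonal p.1 % 5 = r ∧ pentagonal p.2 % 5 = s,
        sg p.1 * sg p.2 := by
  have key : ∀ ij ∈ Finset.HasAntidiagonal.antidiagonal n,
      PowerSeries.coeff ij.1 (part r) * PowerSeries.coeff ij.2 (part s) =
      ∑ p ∈ Finset.Icc (-n : ℤ) n ×ˢ Finset.Icc (-n : ℤ) n,
        if (pentagonal p.1, pentagonal p.2) = ij then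
          (if pentagonal p.1 % 5 = r ∧ pentagonal p.2 % 5 = s then sg p.1 * sg p.2 else 0)
        else 0 := by
    rintro ⟨i, j⟩ hij
    have hij' := Finset.HasAntidiagonal.mem_antidiagonal.1 hij
    simp only at hij'
    rw [Finset.sum_product]
    simp only [part, PowerSeries.coeff_mk]
    rw [coeff_euler (show i ≤ n by omega), coeff_euler (show j ≤ n by omega)]
    by_cases h : i % 5 = r ∧ j % 5 = s
    · rw [if_pos h.1, if_pos h.2, Finset.sum_mul_sum]
      refine Finset.sum_congr rfl fun k _ => Finset.sum_congr rfl fun l _ => ?_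
      by_cases hk : pentagonal k = i <;> by_cases hl : pentagonal l = j <;> simp [hk, hl, h]
    · trans 0
      · rw [ite_zero_mul_ite_zero, if_neg h]
      · symm
        refine Finset.sum_eq_zero fun k _ => Finset.sum_eq_zero fun l _ => ?_
        by_cases hk : pentagonal k = i <;> by_cases hl : pentagonal l = j <;> simp [hk, hl, h]
  rw [PowerSeries.coeff_mul, Finset.sum_congr rfl key, Finset.sum_comm, pentPairs,
    Finset.filter_filter, Finset.sum_filter]
  refine Finset.sum_congr rfl fun p _ => ?_
  rw [Finset.sum_ite_eq]
  simp only [Finset.HasAntidiagonal.mem_antidiagonal, ite_and]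

/-- The residue of `k (3 k - 1) / 2` modulo 5 is `0`, `1` or `2`, and depends on `k` modulo 5. -/
lemma pentagonal_mod (k : ℤ) : (pentagonal k % 5 = 0 ↔ k % 5 = 0 ∨ k % 5 = 2) ∧
    (pentagonal k % 5 = 1 ↔ k % 5 = 1) ∧ (pentagonal k % 5 = 2 ↔ k % 5 = 3 ∨ k % 5 = 4) := by
  have h := two_mul_natCast_pentagonal k
  obtain ⟨m, r, hr0, hr5, rfl⟩ : ∃ m r : ℤ, 0 ≤ r ∧ r < 5 ∧ k = 5 * m + r :=
    ⟨k / 5, k % 5, by omega, by omega, by omega⟩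
  have h' : 2 * (pentagonal (5 * m + r) : ℤ) =
      5 * (m * (15 * m + 6 * r - 1)) + r * (3 * r - 1) := by
    rw [h]; ring
  generalize m * (15 * m + 6 * r - 1) = z at h'
  generalize pentagonal (5 * m + r) = w at *
  interval_cases r <;> omega

/-- The parts of `euler` with exponents congruent to `0`, `1`, `2` modulo 5 satisfy
`part 0 * part 2 = - part 1 ^ 2`. With `X = 6 k - 1`, `Y = 6 l - 1` one has
`X ^ 2 + Y ^ 2 = 24 (pentagonal k + pentagonal l) + 2`; the reflection
`(X, Y) ↦ (-(3 X + 4 Y) / 5, (3 Y - 4 X) / 5)` preserves this norm, acts on the pairs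
with `5 ∣ 2 X + Y`, and reverses the sign `(-1) ^ (k + l)`. -/
lemma part_relation : part 1 * part 1 + part 0 * part 2 = 0 := by
  ext n
  rw [map_add, coeff_part_mul, coeff_part_mul, map_zero]
  have hp := pentagonal_mod
  -- The pairs with `5 ∣ 2 X + Y` cancel in couples under the reflection.
  have hD : ∑ p ∈ (pentPairs n).filter (fun p => (2 * p.1 + p.2) % 5 = 3),
      sg p.1 * sg p.2 = 0 := by
    refine Finset.sum_involution
      (fun p _ => (p.1 - 2 - 4 * ((2 * p.1 + p.2 - 3) / 5),
        -2 * p.1 + 2 + 3 * ((2 * p.1 + p.2 - 3) / 5))) ?_ ?_ ?_ ?_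
    · rintro ⟨k, l⟩ hkl
      have h5 := (Finset.mem_filter.1 hkl).2
      simp only at h5 ⊢
      obtain ⟨m, hm⟩ : ∃ m, l = 3 - 2 * k + 5 * m := ⟨(2 * k + l - 3) / 5, by omega⟩
      have e : (2 * k + l - 3) / 5 = m := by omega
      rw [e, hm]
      simp only [sg, ← Int.cast_mul, ← Units.val_mul, ← Int.negOnePow_add]
      rw [show k - 2 - 4 * m + (-2 * k + 2 + 3 * m) =
          (k + (3 - 2 * k + 5 * m)) + (2 * (-3 * m - 2) + 1)
        by ring, Int.negOnePow_add (k + (3 - 2 * k + 5 * m)), Int.negOnePow_two_mul_add_one]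
      simp
    · rintro ⟨k, l⟩ hkl _ he
      simp only [Prod.mk.injEq] at he
      omega
    · rintro ⟨k, l⟩ hkl
      obtain ⟨h1, h5⟩ := Finset.mem_filter.1 hkl
      rw [mem_pentPairs] at h1
      simp only at h1 h5
      rw [Finset.mem_filter, mem_pentPairs]
      obtain ⟨m, hm⟩ : ∃ m, l = 3 - 2 * k + 5 * m := ⟨(2 * k + l - 3) / 5, by omega⟩
      have e : (2 * k + l - 3) / 5 = m := by omega
      simp only [e]
      refine ⟨?_, by omega⟩
      have a1 := two_mul_natCast_pentagonal k
      have a2 := two_mul_natCast_pentagonal l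
      have a3 := two_mul_natCast_pentagonal (k - 2 - 4 * m)
      have a4 := two_mul_natCast_pentagonal (-2 * k + 2 + 3 * m)
      zify at h1 ⊢
      subst hm
      linarith
    · rintro ⟨k, l⟩ hkl
      have h5 := (Finset.mem_filter.1 hkl).2
      simp only at h5 ⊢
      ext <;> simp only <;> omega
  -- Exchanging `k` and `l` where `k` is `3` or `4` modulo 5 turns these pairs into those counted
  -- by the left-hand side.
  rw [← hD, ← Finset.sum_filter_add_sum_filter_not
    ((pentPairs n).filter fun p => (2 * p.1 + p.2) % 5 = 3) (fun p => p.1 % 5 = 1)]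
  congr 1
  · refine Finset.sum_congr ?_ fun _ _ => rfl
    ext p
    simp only [Finset.mem_filter, (hp _).2.1, and_assoc, and_congr_right_iff]
    intro _
    omega
  · have hswap : ∀ p : ℤ × ℤ, p.swap ∈ pentPairs n ↔ p ∈ pentPairs n := by
      intro p
      rw [mem_pentPairs, mem_pentPairs, Prod.fst_swap, Prod.snd_swap, add_comm]
    refine Finset.sum_nbij' (fun p => if (2 * p.1 + p.2) % 5 = 3 then p else p.swap)
      (fun p => if p.1 % 5 = 0 ∨ p.1 % 5 = 2 then p else p.swap) ?_ ?_ ?_ ?_ ?_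
    · intro p h
      simp only [Finset.mem_filter, (hp _).1, (hp _).2.2] at h ⊢
      split_ifs with hc
      · exact ⟨⟨h.1, hc⟩, by omega⟩
      · refine ⟨⟨(hswap p).2 h.1, ?_⟩, ?_⟩ <;> simp only [Prod.fst_swap, Prod.snd_swap] <;> omega
    · intro p h
      simp only [Finset.mem_filter, (hp _).1, (hp _).2.2] at h ⊢
      split_ifs with hc
      · exact ⟨h.1.1, by omega⟩
      · refine ⟨(hswap p).2 h.1.1, ?_⟩
        have : p.1 % 5 = 3 ∨ p.1 % 5 = 4 := by omega
        rw [Prod.fst_swap, Prod.snd_swap]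
        omega
    · intro p h
      simp only [Finset.mem_filter, (hp _).1, (hp _).2.2] at h
      by_cases h1 : (2 * p.1 + p.2) % 5 = 3
      · rw [if_pos h1, if_pos h.2.1]
      · rw [if_neg h1, if_neg (by rw [Prod.fst_swap]; omega), Prod.swap_swap]
    · intro p h
      simp only [Finset.mem_filter] at h
      by_cases h1 : p.1 % 5 = 0 ∨ p.1 % 5 = 2
      · rw [if_pos h1, if_pos h.1.2]
      · have : p.1 % 5 = 3 ∨ p.1 % 5 = 4 := by omega
        rw [if_neg h1, if_neg (by rw [Prod.fst_swap, Prod.snd_swap]; omega), Prod.swap_swap]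
    · intro p _
      split_ifs
      · rfl
      · rw [Prod.fst_swap, Prod.snd_swap, mul_comm]

/-- `F` is supported on exponents congruent to `r` modulo 5. -/
def Supp (r : ℕ) (F : PowerSeries (ZMod 5)) : Prop :=
  ∀ n, n % 5 ≠ r % 5 → PowerSeries.coeff n F = 0

lemma Supp.mul {r s : ℕ} {F G : PowerSeries (ZMod 5)} (hF : Supp r F) (hG : Supp s G) :
    Supp (r + s) (F * G) := by
  intro n hn
  rw [PowerSeries.coeff_mul]
  refine Finset.sum_eq_zero fun ij hij => ?_
  have h := Finset.HasAntidiagonal.mem_antidiagonal.1 hij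
  by_cases h1 : ij.1 % 5 = r % 5
  · rw [hG _ (by omega), mul_zero]
  · rw [hF _ h1, zero_mul]

lemma Supp.pow {r : ℕ} {F : PowerSeries (ZMod 5)} (hF : Supp r F) (m : ℕ) :
    Supp (r * m) (F ^ m) := by
  induction m with
  | zero =>
    intro n hn
    rw [pow_zero, PowerSeries.coeff_one, if_neg (by rintro rfl; simp at hn)]
  | succ m ih => rw [pow_succ]; exact ih.mul hF

lemma supp_part (r : ℕ) (hr : r < 5) : Supp r (part r) := by
  intro n hn
  rw [part, PowerSeries.coeff_mk, if_neg (by omega)]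

lemma euler_eq : euler = part 0 + part 1 + part 2 := by
  ext n
  simp only [part, map_add, PowerSeries.coeff_mk]
  by_cases h : n ∈ Set.range pentagonal
  · obtain ⟨k, rfl⟩ := h
    have := pentagonal_mod k
    have hk : pentagonal k % 5 = 0 ∨ pentagonal k % 5 = 1 ∨ pentagonal k % 5 = 2 := by omega
    rcases hk with hk | hk | hk <;> simp [hk]
  · have : PowerSeries.coeff n euler = 0 := PowerSeries.coeff_pentagonalSeries_eq_zero _ h
    simp [this]

/-- In the expansion of `euler ^ 4 = (part 0 + part 1 + part 2) ^ 4`, the terms with exponents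
`4` modulo 5 add up to `(part 1 ^ 2 + part 0 * part 2) ^ 2` modulo 5. -/
lemma coeff_euler_pow_four (n : ℕ) : PowerSeries.coeff (5 * n + 4) (euler ^ 4) = 0 := by
  have h5 : (5 : PowerSeries (ZMod 5)) = 0 := by
    have : (5 : PowerSeries (ZMod 5)) = PowerSeries.C (5 : ZMod 5) := rfl
    rw [this, show (5 : ZMod 5) = 0 from rfl, map_zero]
  have a := supp_part 0 (by norm_num)
  have b := supp_part 1 (by norm_num)
  have c := supp_part 2 (by norm_num)
  have hrel := part_relation
  rw [euler_eq]
  generalize part 0 = A at *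
  generalize part 1 = B at *
  generalize part 2 = C at *
  have e : (A + B + C) ^ 4 = A ^ 4 + 4 • (A ^ 3 * B) + 4 • (A ^ 3 * C) + 6 • (A ^ 2 * B ^ 2)
      + 12 • (A ^ 2 * B * C) + 4 • (A * B ^ 3) + 12 • (A * B * C ^ 2) + 4 • (A * C ^ 3)
      + 4 • (B ^ 3 * C) + 6 • (B ^ 2 * C ^ 2) + 4 • (B * C ^ 3) + C ^ 4 := by
    simp only [nsmul_eq_mul]
    push_cast
    linear_combination (B * B + A * C) * hrel + (A ^ 2 * C ^ 2 + 2 * A * B ^ 2 * C) * h5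
  rw [e]
  simp only [map_add, map_nsmul]
  rw [(a.pow 4) _ (by omega), ((a.pow 3).mul b) _ (by omega), ((a.pow 3).mul c) _ (by omega),
    ((a.pow 2).mul (b.pow 2)) _ (by omega), (((a.pow 2).mul b).mul c) _ (by omega),
    (a.mul (b.pow 3)) _ (by omega), ((a.mul b).mul (c.pow 2)) _ (by omega),
    (a.mul (c.pow 3)) _ (by omega), ((b.pow 3).mul c) _ (by omega),
    ((b.pow 2).mul (c.pow 2)) _ (by omega), (b.mul (c.pow 3)) _ (by omega),
    (c.pow 4) _ (by omega)]
  simp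

/-- The generating function of the partition numbers modulo 5. -/
def partGF : PowerSeries (ZMod 5) := PowerSeries.mk fun n => (numPartitions n : ZMod 5)

open PowerSeries PowerSeries.WithPiTopology in
lemma partGF_mul_euler : partGF * euler = 1 := by
  let : TopologicalSpace (ZMod 5) := ⊥
  have : DiscreteTopology (ZMod 5) := ⟨rfl⟩
  have h1 := Nat.Partition.hasProd_powerSeriesMk_card_restricted (ZMod 5) (fun _ => True)
  have h2 := PowerSeries.WithPiTopology.hasProd_one_sub_X_pow (ZMod 5)
  have h3 : PowerSeries.mk (fun n => ((Nat.Partition.restricted n fun _ => True).card : ZMod 5))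
      = partGF := by
    ext n
    simp [partGF, numPartitions, Nat.Partition.restricted]
  rw [h3] at h1
  have h4 := h1.mul h2
  refine h4.unique ?_
  convert! hasProd_one with i
  simp only [if_true, pow_mul]
  exact tsum_pow_mul_one_sub_of_constantCoeff_eq_zero (by simp)

/-- Fifth powers modulo 5 are series in `q ^ 5`. -/
lemma supp_pow_five (F : PowerSeries (ZMod 5)) : Supp 0 (F ^ 5) := by
  intro n hn
  have : Fact (Nat.Prime 5) := ⟨by norm_num⟩
  have h : (PowerSeries.expand 5 (by norm_num) F).map (frobenius (ZMod 5) 5) = F ^ 5 :=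
    MvPowerSeries.map_frobenius_expand 5 (by norm_num)
  rw [← h, PowerSeries.coeff_map, PowerSeries.coeff_expand_of_not_dvd _ _ _ (by omega), map_zero]

/-- **Ramanujan's congruence** `p (5 n + 4) ≡ 0 (mod 5)`, from `1 / euler = euler ^ 4 / euler ^ 5`,
where `1 / euler ^ 5` is a series in `q ^ 5` modulo 5. -/
lemma dvd_numPartitions (n : ℕ) : (5 : ℤ) ∣ numPartitions (5 * n + 4) := by
  have h : partGF = euler ^ 4 * partGF ^ 5 := by
    have := partGF_mul_euler
    calc partGF = partGF * (partGF * euler) ^ 4 := by rw [this]; ring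
      _ = _ := by ring
  have h0 : PowerSeries.coeff (5 * n + 4) partGF = 0 := by
    rw [h, PowerSeries.coeff_mul]
    refine Finset.sum_eq_zero fun ij hij => ?_
    have hij := Finset.HasAntidiagonal.mem_antidiagonal.1 hij
    by_cases h1 : ij.2 % 5 = 0
    · obtain ⟨m, hm⟩ : ∃ m, ij.1 = 5 * m + 4 := ⟨ij.1 / 5, by omega⟩
      rw [hm, coeff_euler_pow_four, zero_mul]
    · rw [supp_pow_five _ _ (by omega), mul_zero]
  rw [partGF, PowerSeries.coeff_mk] at h0
  exact_mod_cast (ZMod.natCast_eq_zero_iff _ 5).1 h0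

/-! ### The congruence for `MO1` -/

theorem stmt5 (J N : ℕ) :
    (5 : ℤ) ∣ MO1 (5 * J + 4) (5 * N + 2) := by
  refine Finset.dvd_sum fun kn hkn => ?_
  have h := (Finset.mem_filter.1 hkn).2
  by_cases hn : 5 ∣ kn.2 * (kn.2 + 1)
  · -- Here `5` divides `n (n + 1) / 2`, so `3 k ≡ 2` and `k ≡ 4` modulo 5.
    have h2 := Nat.even_mul_succ_self kn.2
    rw [even_iff_two_dvd] at h2
    obtain ⟨m, hm⟩ : ∃ m, kn.1 = 5 * m + 4 := ⟨kn.1 / 5, by omega⟩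
    rw [hm]
    exact Dvd.dvd.mul_right (dvd_numPartitions m) _
  · exact Dvd.dvd.mul_left (dvd_c1 _ J hn) _
end
end

section
/- For all integers J ≥ 0 and N ≥ 0, MO(1, 7J+6; 7N+1) ≡ 0 (mod 7). -/
/-!
Every summand `p(k) c1(n, 7J + 6)` with `3k + n(n + 1)/2 = 7N + 1` is divisible by 7.

The polynomials `P_n(x) = ∑_t c1(n, t) x^t` satisfy `P_{n+2} = (x + 1) P_{n+1} - P_n`. Writing
`x + 1 = w + 1/w`, one has `P_n dx = (w^{n+1} - w^{-n-1} - w^n + w^{-n}) dw/w`. Modulo 7 the Cartier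
operator extracts the coefficients of `P_n` at the exponents `7J + 6`, and it kills `w^m dw/w` unless
`7 ∣ m`; hence these coefficients vanish unless `n ≡ 0` or `6 (mod 7)` (`seven_dvd_c1`). In the proof
below this is phrased without `w`: the recurrence gives `P_{n+14} = (x + 1)⁷ P_{n+7} - P_n` modulo 7,
where `(x + 1)⁷ = x⁷ + 1`, and a reflection `n ↦ -1 - n` supplies initial values of degree at most 5.

If `n ≡ 0` or `6 (mod 7)`, then `7 ∣ n(n + 1)/2`, so `k ≡ 5 (mod 7)` and Ramanujan's congruence
`7 ∣ p(k)` applies (`seven_dvd_numPartitions`). It is deduced from Jacobi's identity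
`(q; q)_∞³ = ∑ (-1)^k (2k + 1) q^{k(k+1)/2}`, which is proved in a finite form by differentiating the
`q`-binomial theorem (`jacobi_finite`) and then used up to any prescribed order.
-/


open Finset

noncomputable section

namespace Stmt6

/-! ### Gaussian binomials and the finite Jacobi identity -/

/-- The finite Euler product `(q; q)_n = (1 - q)(1 - q²)⋯(1 - qⁿ)`. -/
def eulerProd {A : Type*} [CommRing A] (q : A) (n : ℕ) : A := ∏ m ∈ range n, (1 - q ^ (m + 1))

/-- The Gaussian binomial coefficient `[n, k]_q`, defined through the `q`-Pascal rule so that it makes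
sense in any commutative ring. -/
def gaussBinom {A : Type*} [CommRing A] (q : A) : ℕ → ℕ → A
  | _, 0 => 1
  | 0, _ + 1 => 0
  | n + 1, k + 1 => gaussBinom q n k + q ^ (k + 1) * gaussBinom q n (k + 1)

section
variable {A : Type*} [CommRing A] (q : A)

lemma eulerProd_succ (n : ℕ) : eulerProd q (n + 1) = eulerProd q n * (1 - q ^ (n + 1)) :=
  prod_range_succ _ _

@[simp] lemma gaussBinom_zero_right (n : ℕ) : gaussBinom q n 0 = 1 := by cases n <;> rfl

lemma gaussBinom_succ_succ (n k : ℕ) : gaussBinom q (n + 1) (k + 1) =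
    gaussBinom q n k + q ^ (k + 1) * gaussBinom q n (k + 1) := rfl

lemma gaussBinom_eq_zero {n k : ℕ} (h : n < k) : gaussBinom q n k = 0 := by
  induction n generalizing k with
  | zero => cases k with
    | zero => omega
    | succ k => rfl
  | succ n ih => cases k with
    | zero => omega
    | succ k => rw [gaussBinom_succ_succ, ih (by omega), ih (by omega)]; ring

lemma gaussBinom_self (n : ℕ) : gaussBinom q n n = 1 := by
  induction n with
  | zero => rfl
  | succ n ih => rw [gaussBinom_succ_succ, ih, gaussBinom_eq_zero q (by omega)]; ring

/-- The product formula `[n, i]_q = (q; q)_n / ((q; q)_i (q; q)_j)` for `i + j = n`, free of division. -/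
lemma gaussBinom_mul_eulerProd (n i j : ℕ) (h : i + j = n) :
    gaussBinom q n i * (eulerProd q i * eulerProd q j) = eulerProd q n := by
  induction n generalizing i j with
  | zero =>
    obtain ⟨rfl, rfl⟩ : i = 0 ∧ j = 0 := by omega
    simp [eulerProd]
  | succ n ih =>
    rcases i with _ | i
    · obtain rfl : j = n + 1 := by omega
      simp [eulerProd]
    rcases j with _ | j
    · obtain rfl : i = n := by omega
      simp [eulerProd, gaussBinom_self]
    · have h1 := ih i (j + 1) (by omega)
      have h2 := ih (i + 1) j (by omega)
      rw [gaussBinom_succ_succ]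
      obtain rfl : n = i + j + 1 := by omega
      rw [eulerProd_succ q i, eulerProd_succ q j, eulerProd_succ q (i + j + 1)] at *
      linear_combination (1 - q ^ (i + 1)) * h1 + q ^ (i + 1) * (1 - q ^ (j + 1)) * h2

/-- The `q`-binomial theorem, in homogeneous form so that `a = qⁿ` can be substituted below without
inverting `q`. -/
lemma prod_add_mul_pow (N : ℕ) (a b : A) :
    ∏ m ∈ range N, (a + b * q ^ m) =
      ∑ i ∈ range (N + 1), q ^ i.choose 2 * gaussBinom q N i * b ^ i * a ^ (N - i) := by
  induction N generalizing b with
  | zero => simp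
  | succ N ih =>
    have h0 : ∏ m ∈ range (N + 1), (a + b * q ^ m)
        = (a + b) * ∏ m ∈ range N, (a + (b * q) * q ^ m) := by
      rw [prod_range_succ', mul_comm]
      simp [pow_succ', mul_assoc]
    rw [h0, ih, add_mul, sum_range_succ' _ (N + 1)]
    have h1 : ∀ k, q ^ (k + 1).choose 2 * gaussBinom q (N + 1) (k + 1) * b ^ (k + 1)
          * a ^ (N + 1 - (k + 1))
        = b * (q ^ k.choose 2 * gaussBinom q N k * (b * q) ^ k * a ^ (N - k))
          + q ^ (k + 1).choose 2 * gaussBinom q N (k + 1) * (b * q) ^ (k + 1) * a ^ (N - k) := by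
      intro k
      rw [gaussBinom_succ_succ, Nat.add_sub_add_right, Nat.choose_succ_succ' k 1, Nat.choose_one_right]
      ring
    simp only [h1, sum_add_distrib, ← mul_sum]
    have h2 : ∑ k ∈ range (N + 1), q ^ (k + 1).choose 2 * gaussBinom q N (k + 1)
          * (b * q) ^ (k + 1) * a ^ (N - k) + a ^ (N + 1)
        = a * ∑ i ∈ range (N + 1), q ^ i.choose 2 * gaussBinom q N i * (b * q) ^ i * a ^ (N - i) := by
      rw [sum_range_succ, gaussBinom_eq_zero q (Nat.lt_succ_self N), sum_range_succ' _ N, mul_add,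
        mul_sum]
      congr 1
      · rw [mul_zero, zero_mul, zero_mul, add_zero]
        refine sum_congr rfl fun k hk ↦ ?_
        have : N - k = N - (k + 1) + 1 := by have := mem_range.1 hk; omega
        rw [this]; ring
      · simp [pow_succ']
    simp only [Nat.choose_zero_succ, pow_zero, gaussBinom_zero_right, Nat.sub_zero, mul_one, one_mul]
    linear_combination -h2

open Polynomial in
/-- The derivative at `Y = -1` of the `q`-binomial theorem for `∏_{m ≤ 2n} (qⁿ + Y q^m)`. The factor
`m = n` is `qⁿ (Y + 1)`, so only the product of the other factors survives on the left. -/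
lemma jacobi_aux (n : ℕ) :
    (-1) ^ n * q ^ (n.choose 2 + n + n * n) * eulerProd q n ^ 2 =
      ∑ i ∈ range (2 * n + 2), q ^ (i.choose 2 + n * (2 * n + 1 - i)) * gaussBinom q (2 * n + 1) i *
        (i * (-1) ^ (i - 1)) := by
  have h := congrArg (fun f : A[X] ↦ (derivative f).eval (-1))
    (prod_add_mul_pow (C q) (2 * n + 1) (C q ^ n) (X : A[X]))
  have hg : ∀ N i, gaussBinom (C q) N i = C (gaussBinom q N i) := by
    intro N
    induction N with
    | zero => intro i; cases i <;> simp [gaussBinom]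
    | succ N ih => intro i; cases i <;> simp [gaussBinom, ih]
  have hR : (derivative (∑ i ∈ range (2 * n + 1 + 1), (C q) ^ i.choose 2 *
        gaussBinom (C q) (2 * n + 1) i * (X : A[X]) ^ i * (C q ^ n) ^ (2 * n + 1 - i))).eval (-1)
      = ∑ i ∈ range (2 * n + 2), q ^ (i.choose 2 + n * (2 * n + 1 - i)) *
        gaussBinom q (2 * n + 1) i * (i * (-1) ^ (i - 1)) := by
    rw [derivative_sum, eval_finsetSum]
    refine sum_congr rfl fun i _ ↦ ?_
    rw [hg]
    have : (C q) ^ i.choose 2 * C (gaussBinom q (2 * n + 1) i) * (X : A[X]) ^ i *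
        (C q ^ n) ^ (2 * n + 1 - i) = C (q ^ (i.choose 2 + n * (2 * n + 1 - i)) *
          gaussBinom q (2 * n + 1) i) * X ^ i := by
      simp only [C_mul, C_pow]; ring
    rw [this, derivative_C_mul, derivative_X_pow]
    simp
  have hL : (derivative (∏ m ∈ range (2 * n + 1), (C q ^ n + (X : A[X]) * C q ^ m))).eval (-1)
      = (-1) ^ n * q ^ (n.choose 2 + n + n * n) * eulerProd q n ^ 2 := by
    have e1 : ∏ m ∈ range (2 * n + 1), (C q ^ n + (X : A[X]) * C q ^ m) =
        (X + 1) * (C q ^ n * (∏ m ∈ range n, (C q ^ n + (X : A[X]) * C q ^ m)) *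
          ∏ m ∈ range n, (C q ^ n + (X : A[X]) * C q ^ (n + 1 + m))) := by
      rw [show 2 * n + 1 = (n + 1) + n by ring, prod_range_add, prod_range_succ]
      ring
    have e2 : ∏ m ∈ range n, (q ^ n + (-1) * q ^ m) = (-1) ^ n * q ^ (n.choose 2) * eulerProd q n := by
      have : ∀ m ∈ range n, q ^ n + (-1) * q ^ m = (-1) * q ^ m * (1 - q ^ (n - 1 - m + 1)) := by
        intro m hm
        have hm := mem_range.1 hm
        have : n = m + (n - 1 - m + 1) := by omega
        generalize n - 1 - m + 1 = d at *
        subst this; ring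
      rw [prod_congr rfl this, prod_mul_distrib, prod_mul_distrib,
        prod_range_reflect (fun m ↦ 1 - q ^ (m + 1)), prod_pow_eq_pow_sum, sum_range_id,
        Nat.choose_two_right]
      simp [eulerProd]
    have e3 : ∏ m ∈ range n, (q ^ n + (-1) * q ^ (n + 1 + m)) = q ^ (n * n) * eulerProd q n := by
      have : ∀ m ∈ range n, q ^ n + (-1) * q ^ (n + 1 + m) = q ^ n * (1 - q ^ (m + 1)) := by
        intro m hm; ring
      rw [prod_congr rfl this, prod_mul_distrib]
      simp [eulerProd, pow_mul]
    rw [e1, derivative_mul]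
    simp only [eval_add, eval_mul, eval_prod, eval_X, eval_one, eval_pow, eval_C, derivative_add,
      derivative_X, derivative_one, eval_zero]
    rw [e2, e3]
    ring
  rw [← hL, ← hR]
  exact h

/-- A finite form of Jacobi's identity `(q; q)_∞³ = ∑ (-1)^k (2k + 1) q^{k(k+1)/2}`: the indices
`i = n - k` and `i = n + 1 + k` in `jacobi_aux` carry the same power of `q` and the same Gaussian
binomial, and their factors `± i` add up to `± (2k + 1)`. -/
lemma jacobi_finite [IsDomain A] (hq : q ≠ 0) (he : ∀ n, eulerProd q n ≠ 0) (n : ℕ) :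
    eulerProd q n ^ 2 = ∑ k ∈ range (n + 1),
      (-1) ^ k * (2 * k + 1) * q ^ (k + 1).choose 2 * gaussBinom q (2 * n + 1) (n + 1 + k) := by
  have h := jacobi_aux q n
  rw [show 2 * n + 2 = (n + 1) + (n + 1) by ring, sum_range_add,
    ← sum_range_reflect _ (n + 1), ← sum_add_distrib] at h
  have hc : (-1) ^ n * q ^ (n.choose 2 + n + n * n) ≠ 0 :=
    mul_ne_zero (pow_ne_zero _ (by simp)) (pow_ne_zero _ hq)
  apply mul_left_cancel₀ hc
  rw [h, mul_sum]
  refine sum_congr rfl fun k hk ↦ ?_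
  obtain ⟨d, rfl⟩ : ∃ d, n = k + d := ⟨n - k, by have := mem_range.1 hk; omega⟩
  have hsymm : gaussBinom q (2 * (k + d) + 1) d =
      gaussBinom q (2 * (k + d) + 1) (k + d + 1 + k) := by
    have h1 := gaussBinom_mul_eulerProd q (2 * (k + d) + 1) d (k + d + 1 + k) (by ring)
    have h2 := gaussBinom_mul_eulerProd q (2 * (k + d) + 1) (k + d + 1 + k) d (by ring)
    apply mul_right_cancel₀ (mul_ne_zero (he d) (he (k + d + 1 + k)))
    linear_combination h1 - h2
  rw [show k + d + 1 - 1 - k = d by omega, hsymm,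
    show 2 * (k + d) + 1 - d = k + d + 1 + k by omega,
    show 2 * (k + d) + 1 - (k + d + 1 + k) = d by omega,
    show k + d + 1 + k - 1 = k + d + k by omega]
  have key : ∀ m : ℕ, 2 * m.choose 2 + m = m * m := by
    intro m
    rw [Nat.choose_two_right, Nat.mul_div_cancel' (Nat.even_mul_pred_self m).two_dvd]
    cases m <;> simp; ring
  -- the powers of `q` at `i = n - k` and `i = n + 1 + k` agree (`E1`, `E2`)
  have x1 := key d
  have x2 := key (k + d)
  have x3 := key (k + 1)
  have x4 := key (k + d + 1 + k)
  have E1 : d.choose 2 + (k + d) * (k + d + 1 + k) =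
      (k + d).choose 2 + (k + d) + (k + d) * (k + d) + (k + 1).choose 2 := by nlinarith
  have E2 : (k + d + 1 + k).choose 2 + (k + d) * d =
      (k + d).choose 2 + (k + d) + (k + d) * (k + d) + (k + 1).choose 2 := by nlinarith
  rw [E1, E2, pow_add q _ ((k + 1).choose 2)]
  -- for `d = 0` the truncated exponent `d - 1` is harmless because of the factor `d`
  have hs : (d : A) * (-1) ^ (d - 1) = - (d * (-1) ^ d) := by
    cases d with
    | zero => simp
    | succ d => simp [pow_succ]
  rw [hs]
  have hk2 : ((-1 : A) ^ k) * (-1) ^ k = 1 := by rw [← mul_pow]; simp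
  push_cast
  simp only [pow_add (-1 : A)]
  generalize gaussBinom q (2 * (k + d) + 1) (k + d + 1 + k) = G
  generalize q ^ ((k + d).choose 2 + (k + d) + (k + d) * (k + d)) = Q
  generalize (-1 : A) ^ k = s at *
  linear_combination (Q * q ^ ((k + 1).choose 2) * G * (-1) ^ d * (d:A)) * hk2
end


/-! ### Ramanujan's congruence `p(7k + 5) ≡ 0 (mod 7)` -/

section
open PowerSeries

instance : Fact (Nat.Prime 7) := ⟨by norm_num⟩

/-- Formal power series with coefficients in `ZMod 7`. -/
abbrev R7 := PowerSeries (ZMod 7)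

/-- The Euler products agree with `eulerProd X n` modulo `X ^ (n + 1)` from index `n` on. -/
lemma eulerProd_dvd (n m : ℕ) (h : n ≤ m) :
    (X : R7) ^ (n + 1) ∣ eulerProd X m - eulerProd X n := by
  induction m, h using Nat.le_induction with
  | base => simp
  | succ m hm ih =>
    have h1 : (X : R7) ^ (n + 1) ∣ X ^ (m + 1) := pow_dvd_pow _ (by omega)
    have : eulerProd (X : R7) (m + 1) - eulerProd X n =
        (eulerProd X m - eulerProd X n) - X ^ (m + 1) * eulerProd X m := by
      rw [eulerProd_succ]; ring
    rw [this]
    exact dvd_sub ih (h1.mul_right _)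

lemma isUnit_eulerProd (n : ℕ) : IsUnit (eulerProd (X : R7) n) := by
  rw [PowerSeries.isUnit_iff_constantCoeff]
  simp [eulerProd, map_prod]

/-- The coefficient `(-1)^k (2k + 1)` of Jacobi's series, modulo 7. -/
def cubeCoeff (k : ℕ) : ZMod 7 := (-1) ^ k * (2 * k + 1)

/-- The partial sum of Jacobi's series `∑ (-1)^k (2k + 1) X^{k(k+1)/2}`, modulo 7; the exponent is
written as the binomial coefficient `C(k + 1, 2)`. -/
def cubeSum (n : ℕ) : R7 := ∑ k ∈ range (n + 1), C (cubeCoeff k) * X ^ (k + 1).choose 2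

/-- Jacobi's identity for the cube of the Euler product, up to order `n` and modulo 7. After
multiplication of `jacobi_finite` by `eulerProd X n`, the `k`-th Gaussian binomial becomes
`1 + O(X^{n - k + 1})`, and the loss of `k` in the precision is made up for by the factor
`X^{k(k+1)/2}`. -/
lemma jacobi_truncated (n : ℕ) : (X : R7) ^ (n + 1) ∣ eulerProd X n ^ 3 - cubeSum n := by
  have h := jacobi_finite (X : R7) X_ne_zero (fun m ↦ (isUnit_eulerProd m).ne_zero) n
  have h3 : eulerProd (X : R7) n ^ 3 - cubeSum n = ∑ k ∈ range (n + 1),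
      C (cubeCoeff k) * (X ^ (k + 1).choose 2 *
        (gaussBinom X (2 * n + 1) (n + 1 + k) * eulerProd X n - 1)) := by
    rw [pow_succ, h, cubeSum, sum_mul, ← sum_sub_distrib]
    refine sum_congr rfl fun k _ ↦ ?_
    simp only [cubeCoeff, map_mul, map_pow, map_add, map_neg, map_one, map_natCast, map_ofNat]
    ring
  rw [h3]
  refine dvd_sum fun k hk ↦ Dvd.dvd.mul_left ?_ _
  obtain ⟨d, rfl⟩ : ∃ d, n = k + d := ⟨n - k, by have := mem_range.1 hk; omega⟩
  have hd : (X : R7) ^ (d + 1) ∣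
      gaussBinom X (2 * (k + d) + 1) (k + d + 1 + k) * eulerProd X (k + d) - 1 := by
    have hf := gaussBinom_mul_eulerProd (X : R7) (2 * (k + d) + 1) (k + d + 1 + k) d (by ring)
    have hu := (isUnit_eulerProd (k + d + 1 + k)).mul (isUnit_eulerProd d)
    rw [← hu.dvd_mul_right]
    have h1 := eulerProd_dvd d (2 * (k + d) + 1) (by omega)
    have h2 := eulerProd_dvd d (k + d) (by omega)
    have h4 := eulerProd_dvd d (k + d + 1 + k) (by omega)
    have : (gaussBinom X (2 * (k + d) + 1) (k + d + 1 + k) * eulerProd X (k + d) - 1) *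
        (eulerProd X (k + d + 1 + k) * eulerProd X d) =
        (eulerProd (X : R7) (2 * (k + d) + 1) - eulerProd X d) * eulerProd X (k + d)
        + (eulerProd X (k + d) - eulerProd X d) * eulerProd X d
        - (eulerProd X (k + d + 1 + k) - eulerProd X d) * eulerProd X d := by
      linear_combination (eulerProd (X : R7) (k + d)) * hf
    rw [this]
    exact dvd_sub (dvd_add (h1.mul_right _) (h2.mul_right _)) (h4.mul_right _)
  have hk : k ≤ (k + 1).choose 2 := by
    rw [Nat.choose_succ_succ' k 1, Nat.choose_one_right]; omega
  calc (X : R7) ^ (k + d + 1) ∣ X ^ ((k + 1).choose 2) * X ^ (d + 1) := by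
        rw [← pow_add]; exact pow_dvd_pow _ (by omega)
    _ ∣ _ := mul_dvd_mul_left _ hd

/-- In characteristic 7, a seventh power is a series in `X ^ 7`. -/
lemma coeff_pow_seven (f : R7) {m : ℕ} (h : ¬ 7 ∣ m) : coeff m (f ^ 7) = 0 := by

  have h7 : f ^ 7 = MvPowerSeries.map (frobenius (ZMod 7) 7) (expand 7 (by norm_num) f) :=
    (MvPowerSeries.map_frobenius_expand 7 (by norm_num) (f := f)).symm
  rw [h7]
  change coeff m (PowerSeries.map (frobenius (ZMod 7) 7) (expand 7 (by norm_num) f)) = 0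
  rw [coeff_map, coeff_expand_of_not_dvd _ _ _ h, map_zero]

/-- The condition on the exponents reads `(2k + 1)² + (2l + 1)² ≡ 0 (mod 7)`; as `-1` is not a square
modulo 7, both `2k + 1` and `2l + 1` are divisible by 7. -/
lemma cubeCoeff_mul_eq_zero (k l : ℕ) (h : ((k + 1).choose 2 + (l + 1).choose 2) % 7 = 5) :
    cubeCoeff k * cubeCoeff l = 0 := by
  have key : ∀ m : ℕ, 2 * (m + 1).choose 2 = m * (m + 1) := by
    intro m
    rw [Nat.choose_two_right, Nat.mul_div_cancel' (Nat.even_mul_pred_self _).two_dvd]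
    simp [mul_comm]
  have h1 : ((((k + 1).choose 2 + (l + 1).choose 2 : ℕ)) : ZMod 7) = (5 : ℕ) :=
    (ZMod.natCast_eq_natCast_iff _ _ _).2 h
  have hk := congrArg (Nat.cast : ℕ → ZMod 7) (key k)
  have hl := congrArg (Nat.cast : ℕ → ZMod 7) (key l)
  push_cast at h1 hk hl
  have h2 : (k : ZMod 7) * (k + 1) + l * (l + 1) = 2 * 5 := by
    rw [← hk, ← hl, ← mul_add, h1]
  have : ∀ a b : ZMod 7, a * (a + 1) + b * (b + 1) = 2 * 5 → 2 * a + 1 = 0 := by decide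
  rw [cubeCoeff, this _ _ h2]
  simp

lemma coeff_cubeSum_sq_mul (F : R7) (n m : ℕ) (hm : m % 7 = 5) :
    coeff m (cubeSum n ^ 2 * F ^ 7) = 0 := by
  rw [sq, cubeSum, sum_mul_sum, sum_mul, map_sum]
  refine sum_eq_zero fun k _ ↦ ?_
  rw [sum_mul, map_sum]
  refine sum_eq_zero fun l _ ↦ ?_
  have : C (cubeCoeff k) * X ^ (k + 1).choose 2 * (C (cubeCoeff l) * X ^ (l + 1).choose 2) * F ^ 7 =
      C (cubeCoeff k * cubeCoeff l) * (X ^ ((k + 1).choose 2 + (l + 1).choose 2) * F ^ 7) := by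
    rw [map_mul]; ring
  rw [this, coeff_C_mul, coeff_X_pow_mul']
  split_ifs with hle
  · by_cases hd : 7 ∣ m - ((k + 1).choose 2 + (l + 1).choose 2)
    · rw [cubeCoeff_mul_eq_zero k l (by omega), zero_mul]
    · rw [coeff_pow_seven F hd, mul_zero]
  · rw [mul_zero]

/-- The generating function `∑ p(n) Xⁿ` of the partition numbers, modulo 7. -/
def partitionSeries : R7 := PowerSeries.mk fun n ↦ (Fintype.card (Nat.Partition n) : ZMod 7)

open PowerSeries.WithPiTopology in
/-- Euler's product formula `∑ p(n) Xⁿ = 1 / (X; X)_∞`, up to order `n`. -/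
lemma partitionSeries_mul_eulerProd (n : ℕ) :
    (X : R7) ^ (n + 1) ∣ partitionSeries * eulerProd X n - 1 := by
  let : TopologicalSpace (ZMod 7) := ⊥
  have : DiscreteTopology (ZMod 7) := ⟨rfl⟩
  have h1 := Nat.Partition.hasProd_powerSeriesMk_card_restricted (ZMod 7) (fun _ ↦ True)
  have h2 := (PowerSeries.WithPiTopology.multipliable_one_sub_X_pow (ZMod 7)).hasProd
  have hP : PowerSeries.mk (fun n ↦ (#(Nat.Partition.restricted n fun _ ↦ True) : ZMod 7))
      = partitionSeries := by
    simp [partitionSeries, Nat.Partition.restricted]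
  rw [hP] at h1
  have h3 := h1.mul h2
  have hone : (fun i : ℕ ↦ (if True then ∑' j : ℕ, (X : R7) ^ ((i + 1) * j) else 1) *
      (1 - X ^ (i + 1))) = fun _ ↦ 1 := by
    funext i
    simp only [if_true, pow_mul]
    exact tsum_pow_mul_one_sub_of_constantCoeff_eq_zero (by simp)
  rw [hone] at h3
  have hPE := h3.unique hasProd_one
  have h4 := h2.tendsto_prod_nat
  rw [PowerSeries.WithPiTopology.tendsto_iff_coeff_tendsto] at h4
  set E : R7 := ∏' i, (1 - X ^ (i + 1)) with hE
  have hdvd : (X : R7) ^ (n + 1) ∣ E - eulerProd X n := by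
    rw [PowerSeries.X_pow_dvd_iff]
    intro d hd
    have h5 := h4 d
    rw [nhds_discrete, Filter.tendsto_pure, Filter.eventually_atTop] at h5
    obtain ⟨a, ha⟩ := h5
    have h6 := ha (max a n) (le_max_left _ _)
    have h7 := PowerSeries.X_pow_dvd_iff.1 (eulerProd_dvd n (max a n) (le_max_right _ _)) d hd
    rw [map_sub, ← h6]
    rw [map_sub] at h7
    exact h7
  have : partitionSeries * eulerProd X n - 1 = -(partitionSeries * (E - eulerProd X n)) := by
    linear_combination hPE
  rw [this]
  exact (hdvd.mul_left _).neg_right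

/-- Ramanujan's congruence modulo 7. With `P` the partition series and `e` the Euler product,
`P = P (P e)⁶ = (e³)² P⁷`, where `P⁷` is a series in `X ^ 7` and the square of Jacobi's series has no
terms whose exponent is `5` modulo `7`. -/
lemma seven_dvd_numPartitions {k : ℕ} (hk : k % 7 = 5) :
    (7 : ℤ) ∣ (Nat.card (Nat.Partition k) : ℤ) := by
  have hP := partitionSeries_mul_eulerProd k
  have hJ := jacobi_truncated k
  set e := eulerProd (X : R7) k
  set P := partitionSeries with hPdef
  set T := cubeSum k
  have h : (X : R7) ^ (k + 1) ∣ T ^ 2 * P ^ 7 - P := by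
    have h1 : (X : R7) ^ (k + 1) ∣ (P * e) ^ 6 - 1 := by
      have := hP.trans (sub_dvd_pow_sub_pow (P * e) 1 6)
      rwa [one_pow] at this
    have : T ^ 2 * P ^ 7 - P =
        P * ((P * e) ^ 6 - 1) - (e ^ 3 - T) * ((e ^ 3 + T) * P ^ 7) := by ring
    rw [this]
    exact dvd_sub (h1.mul_left _) (hJ.mul_right _)
  have h2 := PowerSeries.X_pow_dvd_iff.1 h k (Nat.lt_succ_self k)
  rw [map_sub, coeff_cubeSum_sq_mul P k k hk, zero_sub, neg_eq_zero, hPdef, partitionSeries,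
    coeff_mk] at h2
  rw [Nat.card_eq_fintype_card]
  exact_mod_cast (ZMod.natCast_eq_zero_iff _ 7).1 h2

end

/-! ### Vanishing of `c1 n (7J + 6)` modulo 7 -/

section
open Polynomial

/-- The polynomials `∑_k (-1)^{n+k} (C(n+k+1, 2k+1) + C(n+k, 2k+1)) Y^k` behind `c1`, given by their
Chebyshev-type recurrence; see `coeff_cheb`. -/
def cheb : ℕ → ℤ[X]
  | 0 => 1
  | 1 => X - 3
  | n + 2 => (X - 2) * cheb (n + 1) - cheb n

lemma coeff_cheb (n k : ℕ) : (cheb n).coeff k = (-1) ^ (n + k) *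
    (((n + k + 1).choose (2 * k + 1) : ℤ) + ((n + k).choose (2 * k + 1) : ℤ)) := by
  induction n using Nat.twoStepInduction generalizing k with
  | zero =>
    rcases k with _ | k
    · simp [cheb]
    · rw [Nat.choose_eq_zero_of_lt (by omega), Nat.choose_eq_zero_of_lt (by omega)]
      simp [cheb, coeff_one]
  | one =>
    rcases k with _ | _ | k
    · simp [cheb]
    · simp [cheb]
    · rw [Nat.choose_eq_zero_of_lt (by omega), Nat.choose_eq_zero_of_lt (by omega)]
      rw [cheb, ← C_ofNat, coeff_sub, coeff_X, coeff_C]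
      simp
  | more n ih1 ih2 =>
    have hp : ∀ m j : ℕ, ((m + 2).choose (j + 2) : ℤ) =
        m.choose j + 2 * (m + 1).choose (j + 2) - m.choose (j + 2) := by
      intro m j
      simp only [Nat.choose_succ_succ']
      push_cast
      ring
    rw [cheb, sub_mul, coeff_sub, coeff_sub, ih1, ← C_ofNat, coeff_C_mul, ih2]
    rcases k with _ | k
    · simp
      ring
    · rw [coeff_X_mul, ih2]
      have h1 := hp (n + k + 2) (2 * k + 1)
      have h2 := hp (n + k + 1) (2 * k + 1)
      rw [show n + 2 + (k + 1) + 1 = n + k + 2 + 2 by ring, show n + 2 + (k + 1) = n + k + 1 + 2 by ring,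
        show 2 * (k + 1) + 1 = 2 * k + 1 + 2 by ring,
        show n + 1 + k + 1 = n + k + 2 by ring, show n + 1 + k = n + k + 1 by ring,
        show n + 1 + (k + 1) + 1 = n + k + 2 + 1 by ring,
        show n + 1 + (k + 1) = n + k + 1 + 1 by ring,
        show n + (k + 1) + 1 = n + k + 2 by ring, show n + (k + 1) = n + k + 1 by ring]
      linear_combination -(-1) ^ (n + k + 1 + 2) * (h1 + h2)

/-- `c1 n t` is the `t`-th Taylor coefficient of `cheb n` at `3`. -/
lemma coeff_cheb_comp (n t : ℕ) : ((cheb n).comp (X + C 3)).coeff t = c1 n t := by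
  have hdeg : (cheb n).natDegree < n + 1 := by
    rw [Nat.lt_succ_iff, natDegree_le_iff_coeff_eq_zero]
    intro k hk
    rw [coeff_cheb, Nat.choose_eq_zero_of_lt (by omega), Nat.choose_eq_zero_of_lt (by omega)]
    simp
  rw [comp, eval₂_eq_sum_range' _ hdeg, finsetSum_coeff, c1]
  refine sum_congr rfl fun k _ ↦ ?_
  rw [coeff_C_mul, coeff_X_add_C_pow, coeff_cheb]
  ring

/-- The polynomial `∑_t c1(n, t) X^t` modulo 7. -/
def chebMod (n : ℕ) : (ZMod 7)[X] := ((cheb n).comp (X + C 3)).map (Int.castRingHom (ZMod 7))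

lemma coeff_chebMod (n t : ℕ) : (chebMod n).coeff t = c1 n t := by
  rw [chebMod, coeff_map, coeff_cheb_comp, eq_intCast]

lemma chebMod_zero : chebMod 0 = 1 := by simp [chebMod, cheb]

lemma chebMod_one : chebMod 1 = X := by
  simp [chebMod, cheb]

lemma chebMod_add_two (n : ℕ) : chebMod (n + 2) = (X + 1) * chebMod (n + 1) - chebMod n := by
  simp only [chebMod, cheb, sub_comp, mul_comp, Polynomial.map_sub, Polynomial.map_mul, X_comp,
    ofNat_comp, Polynomial.map_add, map_X, Polynomial.map_C]
  congr 2
  have : (C ((Int.castRingHom (ZMod 7)) 3)) = (3 : (ZMod 7)[X]) := by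
    rw [map_ofNat, map_ofNat]
  rw [this, Nat.cast_ofNat, Polynomial.map_ofNat]
  ring

/-- With `a = w + 1/w`, the solutions of the recurrence are combinations of `wⁿ` and `w⁻ⁿ`, and
`w⁷ + w⁻⁷ = (w + 1/w)⁷` in characteristic 7. -/
lemma add_fourteen {A : Type*} [CommRing A] [CharP A 7] (a : A) (v : ℕ → A)
    (hv : ∀ n, v (n + 2) = a * v (n + 1) - v n) (n : ℕ) :
    v (n + 14) = a ^ 7 * v (n + 7) - v n := by
  have h7 : (7 : A) = 0 := by exact_mod_cast CharP.cast_eq_zero A 7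
  have h : v (n + 14) = (a ^ 7 - 7 * a ^ 5 + 14 * a ^ 3 - 7 * a) * v (n + 7) - v n := by
    simp only [hv]
    ring
  linear_combination h + (-a ^ 5 + 2 * a ^ 3 - a) * v (n + 7) * h7

/-- The sequence `chebMod`, shifted by 6 and extended to negative indices by the reflection
`n ↦ -1 - n`, under which the recurrence is invariant: `chebRefl m` stands for `chebMod (m - 6)`.
For `m ≤ 11` all these polynomials have degree at most 5. -/
def chebRefl (m : ℕ) : (ZMod 7)[X] := if m ≤ 5 then chebMod (5 - m) else chebMod (m - 6)

lemma chebRefl_add_two (m : ℕ) :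
    chebRefl (m + 2) = (X + 1) * chebRefl (m + 1) - chebRefl m := by
  have h0 := chebMod_zero
  have h1 := chebMod_one
  rcases lt_or_ge m 6 with h | h
  · have e := fun k ↦ chebMod_add_two k
    interval_cases m <;> simp [chebRefl, e, h0, h1]
  · obtain ⟨d, rfl⟩ := Nat.exists_eq_add_of_le' h
    have := chebMod_add_two d
    simpa [chebRefl, show ¬ d + 6 + 2 ≤ 5 by omega, show ¬ d + 6 + 1 ≤ 5 by omega,
      show d + 6 + 2 - 6 = d + 2 by omega, show d + 6 + 1 - 6 = d + 1 by omega,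
      show ¬ d + 6 ≤ 5 by omega] using this

lemma coeff_chebMod_of_lt {n t : ℕ} (h : n < t) : (chebMod n).coeff t = 0 := by
  rw [coeff_chebMod, c1, sum_eq_zero, Int.cast_zero]
  intro k hk
  rw [Nat.choose_eq_zero_of_lt (show k < t by have := mem_range.1 hk; omega)]
  simp

/-- The polynomials with vanishing coefficients at all exponents `7J + 6` are stable under
multiplication by `(X + 1)⁷ = X⁷ + 1`, so the claim propagates along `add_fourteen` from the initial
polynomials, whose degree is at most 5. -/
lemma coeff_chebRefl (m J : ℕ) (h : m % 7 < 5) : (chebRefl m).coeff (7 * J + 6) = 0 := by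
  induction m using Nat.strong_induction_on generalizing J with
  | _ m ih =>
    rcases lt_or_ge m 14 with hm | hm
    · rw [chebRefl]
      split_ifs <;> exact coeff_chebMod_of_lt (by omega)
    · obtain ⟨d, rfl⟩ := Nat.exists_eq_add_of_le' hm
      rw [add_fourteen (X + 1) chebRefl chebRefl_add_two, add_pow_char, one_pow, add_mul, one_mul,
        coeff_sub, coeff_add, ih d (by omega) _ (by omega), ih (d + 7) (by omega) _ (by omega),
        coeff_X_pow_mul']
      split_ifs with hJ
      · rw [show 7 * J + 6 - 7 = 7 * (J - 1) + 6 by omega, ih (d + 7) (by omega) _ (by omega)]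
        simp
      · simp

lemma seven_dvd_c1 (n J : ℕ) (h : (n + 6) % 7 < 5) : (7 : ℤ) ∣ c1 n (7 * J + 6) := by
  have h1 := coeff_chebRefl (n + 6) J h
  rw [chebRefl, if_neg (by omega), Nat.add_sub_cancel, coeff_chebMod] at h1
  exact_mod_cast (ZMod.intCast_zmod_eq_zero_iff_dvd _ 7).1 h1

end

end Stmt6

theorem stmt6 (J N : ℕ) :
    (7 : ℤ) ∣ MO1 (7 * J + 6) (7 * N + 1) := by
  refine Finset.dvd_sum fun ⟨k, n⟩ hkn ↦ ?_
  have h := (mem_filter.1 hkn).2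
  dsimp only at h ⊢
  by_cases hn : (n + 6) % 7 < 5
  · exact (Stmt6.seven_dvd_c1 n J hn).mul_left _
    -- the remaining case is `n ≡ 0, 6 (mod 7)`, which forces `3k ≡ 1`, that is `k ≡ 5 (mod 7)`
  · have h2 : 2 * (n * (n + 1) / 2) = n * (n + 1) :=
      Nat.mul_div_cancel' (Nat.even_mul_succ_self n).two_dvd
    have h3 : (n * (n + 1)) % 7 = 0 := by
      rw [Nat.mul_mod]
      rcases (by omega : n % 7 = 0 ∨ (n + 1) % 7 = 0) with h | h <;> simp [h]
    exact (Stmt6.seven_dvd_numPartitions (by omega : k % 7 = 5)).mul_right _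
end
end

section
/- For all integers J ≥ 0 and N ≥ 0, MO(1, 11J+10; 11N+7) ≡ 0 (mod 11). -/
open Finset

noncomputable section

/-!
Every summand `p(k) * c1(n, 11 * J + 10)` of `MO1 (11 * J + 10) (11 * N + 7)` is divisible by 11.

The polynomials `∑ c1(n, t) * y ^ t` satisfy the Chebyshev recurrence
`P (n + 2) = (y + 1) * P (n + 1) - P n`, with `P 0 = 1` and `P 1 = y`. Hence the generating function
of `n ↦ c1(n, t)` is `(1 - X) * X ^ t / (1 - X + X ^ 2) ^ (t + 1)`. For `t = 11 * J + 10` the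
denominator is an 11th power, so modulo 11 it is a series in `X ^ 11`, and the generating function
is supported on the residues of the exponents of `X ^ t - X ^ (t + 1)`: `c1(n, t)` is divisible by
11 unless `n ≡ 0` or `n ≡ 10` (`eleven_dvd_c1`). For those `n` the triangular number
`n * (n + 1) / 2` is divisible by 11, so `3 * k ≡ 7`, that is `k ≡ 6`, and Ramanujan's congruence
`11 ∣ p(11 * m + 6)` applies (`eleven_dvd_numPartitions`).

For Ramanujan's congruence let `E = ∏ (1 - X ^ n)` over `ZMod 11`. Since `1 / E = E ^ 21 / E ^ 22`
and `E ^ 22` is a series in `X ^ 11`, it is enough that `E ^ 21` has no exponents congruent to 6.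
By Jacobi's identity `E ^ 3 = ∑ (-1) ^ j * (2 * j + 1) * X ^ (j * (j + 1) / 2)`, only five residue
classes of exponents occur in `E ^ 3`. On the other hand `(E ^ 3) ^ 4 = E ^ 11 * E`, and by Euler's
pentagonal number theorem five residue classes are missing from it. This gives five quartic
relations between the five components of `E ^ 3`, and the component of `(E ^ 3) ^ 7` in question is
a combination of these relations (`cmp_E_pow`). Jacobi's identity itself comes from
differentiating the finite `q`-binomial theorem (`finite_jacobi`).
-/

namespace Mod11

/-! ### Components of power series modulo 11 -/

instance fact_prime_eleven : Fact (Nat.Prime 11) := ⟨by norm_num⟩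

/-- The part of `f` supported on the exponents congruent to `r` modulo 11 (zero if `r ≥ 11`). -/
def cmp (r : ℕ) (f : PowerSeries (ZMod 11)) : PowerSeries (ZMod 11) :=
  PowerSeries.mk fun n => if n % 11 = r then f.coeff n else 0

lemma coeff_cmp (r n : ℕ) (f : PowerSeries (ZMod 11)) :
    (cmp r f).coeff n = if n % 11 = r then f.coeff n else 0 := by
  simp [cmp]

lemma cmp_eq_zero {r : ℕ} {f : PowerSeries (ZMod 11)} (h : ∀ n, n % 11 = r → f.coeff n = 0) :
    cmp r f = 0 := by
  ext n
  rw [coeff_cmp, map_zero]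
  split_ifs with hn
  exacts [h n hn, rfl]

/-- The residue `r - a` modulo 11 is written as `(r + 10 * a) % 11`, so that `simp` can compute
it for numerals. -/
lemma cmp_mul {r : ℕ} (hr : r < 11) (f g : PowerSeries (ZMod 11)) :
    cmp r (f * g) = ∑ a ∈ range 11, cmp a f * cmp ((r + 10 * a) % 11) g := by
  ext n
  simp only [coeff_cmp, map_sum, PowerSeries.coeff_mul]
  rw [Finset.sum_comm]
  have key : ∀ x ∈ antidiagonal n, ∑ a ∈ range 11,
      ((if x.1 % 11 = a then f.coeff x.1 else 0) *
        (if x.2 % 11 = (r + 10 * a) % 11 then g.coeff x.2 else 0)) =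
      if n % 11 = r then f.coeff x.1 * g.coeff x.2 else 0 := by
    intro x hx
    rw [HasAntidiagonal.mem_antidiagonal] at hx
    simp only [ite_mul, zero_mul]
    rw [Finset.sum_ite_eq, if_pos (mem_range.mpr (by omega)), mul_ite, mul_zero]
    exact if_congr (by omega) rfl rfl
  rw [Finset.sum_congr rfl key]
  split_ifs <;> simp

/-- In characteristic 11, an 11th power is a series in `X ^ 11`. -/
lemma coeff_pow_eleven (f : PowerSeries (ZMod 11)) {n : ℕ} (hn : ¬ 11 ∣ n) :
    (f ^ 11).coeff n = 0 := by
  have h : f ^ 11 = PowerSeries.map (frobenius (ZMod 11) 11)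
      (PowerSeries.expand 11 (by norm_num) f) :=
    (MvPowerSeries.map_frobenius_expand 11 (by norm_num)).symm
  rw [h, PowerSeries.coeff_map, PowerSeries.coeff_expand_of_not_dvd _ _ _ hn, map_zero]

lemma cmp_pow_eleven_mul {r : ℕ} (hr : r < 11) (f g : PowerSeries (ZMod 11)) :
    cmp r (f ^ 11 * g) = f ^ 11 * cmp r g := by
  have h : ∀ a ∈ range 11, a ≠ 0 → cmp a (f ^ 11) * cmp ((r + 10 * a) % 11) g = 0 := by
    intro a _ ha
    rw [cmp_eq_zero fun n hn => coeff_pow_eleven f (by omega), zero_mul]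
  rw [cmp_mul hr, sum_eq_single_of_mem 0 (by simp) h, mul_zero, add_zero, Nat.mod_eq_of_lt hr]
  congr 1
  ext n
  rw [coeff_cmp]
  split_ifs with hn
  · rfl
  · exact (coeff_pow_eleven f (by omega)).symm

/-! ### The coefficients `c1 n t` -/

/-- The signed binomial factor occurring in `c1`. -/
def a (n k : ℕ) : ℤ :=
  (-1 : ℤ) ^ (n + k) * (((n + k + 1).choose (2 * k + 1) : ℤ) + ((n + k).choose (2 * k + 1) : ℤ))

lemma a_eq_zero {n k : ℕ} (h : n < k) : a n k = 0 := by
  rw [a, Nat.choose_eq_zero_of_lt (by omega), Nat.choose_eq_zero_of_lt (by omega)]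
  simp

lemma choose_rec (m r : ℕ) : ((m + 2).choose (r + 2) : ℤ) =
    m.choose r + 2 * (m + 1).choose (r + 2) - m.choose (r + 2) := by
  have h1 := Nat.choose_succ_succ (m + 1) (r + 1)
  have h2 := Nat.choose_succ_succ m r
  have h3 := Nat.choose_succ_succ m (r + 1)
  simp only [Nat.succ_eq_add_one, add_assoc, Nat.reduceAdd] at h1 h2 h3
  omega

lemma a_succ (n k : ℕ) : a (n + 2) (k + 1) = a (n + 1) k - 2 * a (n + 1) (k + 1) - a n (k + 1) := by
  have h1 := choose_rec (n + k + 2) (2 * k + 1)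
  have h2 := choose_rec (n + k + 1) (2 * k + 1)
  simp only [a]
  rw [show n + 2 + (k + 1) + 1 = n + k + 2 + 2 by ring, show n + 2 + (k + 1) = n + k + 1 + 2 by ring,
    show 2 * (k + 1) + 1 = 2 * k + 1 + 2 by ring, show n + 1 + k + 1 = n + k + 2 by ring,
    show n + 1 + k = n + k + 1 by ring, show n + 1 + (k + 1) + 1 = n + k + 2 + 1 by ring,
    show n + 1 + (k + 1) = n + k + 1 + 1 by ring, show n + (k + 1) + 1 = n + k + 2 by ring,
    show n + (k + 1) = n + k + 1 by ring, h1, h2]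
  ring

lemma a_zero (n : ℕ) : a n 0 = (-1) ^ n * (2 * n + 1) := by
  simp [a, two_mul, add_right_comm]

lemma a_succ_zero (n : ℕ) : a (n + 2) 0 = - 2 * a (n + 1) 0 - a n 0 := by
  simp only [a_zero]; push_cast; ring

open Polynomial in
/-- The polynomial `∑ c1 n t * y ^ t`; in the variable `x = y + 3` it is `∑ a n k * x ^ k`. -/
def P (n : ℕ) : ℤ[X] := ∑ k ∈ range (n + 1), C (a n k) * (X + C 3) ^ k

lemma coeff_P (n t : ℕ) : (P n).coeff t = c1 n t := by
  rw [P, Polynomial.finsetSum_coeff, c1]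
  refine sum_congr rfl fun k _ => ?_
  rw [Polynomial.coeff_C_mul, Polynomial.coeff_X_add_C_pow, a]
  ring

open Polynomial in
lemma P_eq {n M : ℕ} (h : n < M) : P n = ∑ k ∈ range M, C (a n k) * (X + C 3) ^ k := by
  rw [P]
  refine sum_subset (fun k hk => by simp at hk ⊢; omega) fun k _ hk => ?_
  rw [a_eq_zero (by simpa using hk)]
  simp

open Polynomial in
lemma P_split {n M : ℕ} (h : n < M + 1) :
    P n = ∑ k ∈ range M, C (a n (k + 1)) * (X + C 3) ^ (k + 1) + C (a n 0) := by
  rw [P_eq h, sum_range_succ', pow_zero, mul_one]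

open Polynomial in
/-- The Chebyshev recurrence `P (n + 2) = (x - 2) * P (n + 1) - P n`, where `x = y + 3`. -/
lemma P_succ (n : ℕ) : P (n + 2) = (X + 1) * P (n + 1) - P n := by
  have h : P (n + 2) = (X + C 3) * P (n + 1) - 2 * P (n + 1) - P n := by
    have hs : ∑ k ∈ range (n + 2), C (a (n + 2) (k + 1)) * (X + C 3) ^ (k + 1) =
        (X + C 3) * P (n + 1) - 2 * ∑ k ∈ range (n + 2), C (a (n + 1) (k + 1)) * (X + C 3) ^ (k + 1)
          - ∑ k ∈ range (n + 2), C (a n (k + 1)) * (X + C 3) ^ (k + 1) := by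
      rw [P, mul_sum, mul_sum, ← sum_sub_distrib, ← sum_sub_distrib]
      refine sum_congr rfl fun k _ => ?_
      simp only [a_succ, C_sub, C_mul, C_ofNat]
      ring
    have e1 := P_split (show n + 1 < n + 2 + 1 by omega)
    have e0 := P_split (show n < n + 2 + 1 by omega)
    rw [P_split (show n + 2 < n + 2 + 1 by omega), hs, a_succ_zero]
    simp only [C_sub, C_mul, C_neg, C_ofNat] at e1 e0 ⊢
    linear_combination 2 * e1 + e0
  rw [h]
  simp only [C_ofNat]
  ring

open Polynomial in
lemma P_zero : P 0 = 1 := by simp [P, a]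

open Polynomial in
lemma P_one : P 1 = X := by
  simp [P, sum_range_succ, a]
  ring

lemma c1_zero (t : ℕ) : c1 0 t = if t = 0 then 1 else 0 := by
  rw [← coeff_P, P_zero, Polynomial.coeff_one]

lemma c1_one (t : ℕ) : c1 1 t = if t = 1 then 1 else 0 := by
  rw [← coeff_P, P_one, Polynomial.coeff_X]; simp [eq_comm]

lemma c1_rec_zero (n : ℕ) : c1 (n + 2) 0 = c1 (n + 1) 0 - c1 n 0 := by
  simp [← coeff_P, P_succ, add_mul]

lemma c1_rec (n t : ℕ) :
    c1 (n + 2) (t + 1) = c1 (n + 1) t + c1 (n + 1) (t + 1) - c1 n (t + 1) := by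
  simp [← coeff_P, P_succ, add_mul]

/-- The generating function of `n ↦ c1 n t` modulo 11. -/
def F (t : ℕ) : PowerSeries (ZMod 11) := PowerSeries.mk fun n => (c1 n t : ZMod 11)

open PowerSeries in
lemma F_zero : (1 - X + X ^ 2) * F 0 = 1 - X := by
  ext n
  obtain _ | _ | n := n
  · simp [F, c1_zero]
  · simp [sub_mul, add_mul, F, pow_two, mul_assoc, coeff_succ_X_mul, c1_zero, c1_one, coeff_one]
  · simp [sub_mul, add_mul, F, pow_two, mul_assoc, coeff_succ_X_mul, c1_rec_zero, coeff_one, coeff_X]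

open PowerSeries in
lemma F_succ (t : ℕ) : (1 - X + X ^ 2) * F (t + 1) = X * F t := by
  ext n
  obtain _ | _ | n := n
  · simp [F, c1_zero]
  · simp [sub_mul, add_mul, F, pow_two, mul_assoc, coeff_succ_X_mul, c1_zero, c1_one]
  · simp [sub_mul, add_mul, F, pow_two, mul_assoc, coeff_succ_X_mul, c1_rec]
    ring

open PowerSeries in
lemma F_eq (t : ℕ) : (1 - X + X ^ 2) ^ (t + 1) * F t = (1 - X) * X ^ t := by
  induction t with
  | zero => simpa using F_zero
  | succ t ih => rw [pow_succ, mul_assoc, F_succ, mul_left_comm, ih]; ring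

open PowerSeries in
lemma eleven_dvd_c1 {J n : ℕ} (h0 : n % 11 ≠ 0) (h10 : n % 11 ≠ 10) :
    (11 : ℤ) ∣ c1 n (11 * J + 10) := by
  have h := congrArg (cmp (n % 11)) (F_eq (11 * J + 10))
  rw [show 11 * J + 10 + 1 = (J + 1) * 11 by ring, pow_mul, cmp_pow_eleven_mul (by omega),
    cmp_eq_zero (f := (1 - X) * X ^ (11 * J + 10))] at h
  · have hne : (((1 : PowerSeries (ZMod 11)) - X + X ^ 2) ^ (J + 1)) ^ 11 ≠ 0 := by
      intro h'
      simpa using (congrArg (coeff 0) h' : _)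
    have hc := congrArg (coeff n) ((mul_eq_zero.mp h).resolve_left hne)
    rw [coeff_cmp, if_pos rfl, F, coeff_mk, map_zero] at hc
    exact_mod_cast (ZMod.intCast_zmod_eq_zero_iff_dvd _ 11).mp hc
  · intro m hm
    rw [sub_mul, one_mul, ← pow_succ', map_sub, coeff_X_pow, coeff_X_pow, if_neg (by omega),
      if_neg (by omega), sub_zero]

/-! ### Jacobi's identity for the cube of the Euler product -/

open PowerSeries in
/-- The finite product `(1 - X) ⋯ (1 - X ^ n)`. -/
def poch (n : ℕ) : PowerSeries (ZMod 11) := ∏ i ∈ range n, (1 - X ^ (i + 1))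

open PowerSeries in
lemma poch_succ (n : ℕ) : poch (n + 1) = poch n * (1 - X ^ (n + 1)) := by
  rw [poch, prod_range_succ, poch]

lemma poch_zero : poch 0 = 1 := by simp [poch]

open PowerSeries in
lemma poch_coeff_zero (n : ℕ) : constantCoeff (poch n) = 1 := by
  simp [poch]

lemma poch_isUnit (n : ℕ) : IsUnit (poch n) := by
  rw [PowerSeries.isUnit_iff_constantCoeff, poch_coeff_zero]
  exact isUnit_one

open PowerSeries in
/-- The Gaussian binomial coefficient in the variable `X`, defined by the Pascal recursion
(for `i > N` the truncated exponent is multiplied by zero). -/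
def qb : ℕ → ℕ → PowerSeries (ZMod 11)
  | _, 0 => 1
  | 0, _ + 1 => 0
  | N + 1, i + 1 => qb N (i + 1) + X ^ (N - i) * qb N i

lemma qb_zero (N : ℕ) : qb N 0 = 1 := by cases N <;> rfl

open PowerSeries in
lemma qb_succ (N i : ℕ) : qb (N + 1) (i + 1) = qb N (i + 1) + X ^ (N - i) * qb N i := rfl

lemma qb_eq_zero {N i : ℕ} (h : N < i) : qb N i = 0 := by
  induction N generalizing i with
  | zero => obtain ⟨i, rfl⟩ := Nat.exists_eq_succ_of_ne_zero h.ne'; rfl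
  | succ N ih =>
    obtain ⟨i, rfl⟩ := Nat.exists_eq_succ_of_ne_zero (by omega : i ≠ 0)
    rw [Nat.succ_eq_add_one, qb_succ, ih (by omega), ih (by omega), mul_zero, add_zero]

/-- The closed form of the Gaussian binomial coefficient `[i + j, i]`. -/
lemma qb_mul (i j : ℕ) : qb (i + j) i * poch i * poch j = poch (i + j) := by
  induction h : i + j generalizing i j with
  | zero =>
    obtain ⟨rfl, rfl⟩ : i = 0 ∧ j = 0 := by omega
    simp [qb_zero, poch_zero]
  | succ N ih =>
    obtain _ | i := i
    · obtain rfl : j = N + 1 := by omega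
      simp [qb_zero, poch_zero]
    obtain _ | j := j
    · obtain rfl : N = i := by omega
      have := ih N 0 (by omega)
      rw [qb_succ, qb_eq_zero (by omega), Nat.sub_self, pow_zero, one_mul, zero_add, poch_succ]
      linear_combination (1 - PowerSeries.X ^ (N + 1)) * this
    · obtain rfl : N = i + j + 1 := by omega
      have h1 := ih (i + 1) j (by omega)
      have h2 := ih i (j + 1) (by omega)
      rw [qb_succ, poch_succ (i + j + 1), show i + j + 1 - i = j + 1 by omega]
      rw [poch_succ] at h1 h2 ⊢
      rw [poch_succ j]
      linear_combination (1 - PowerSeries.X ^ (j + 1)) * h1 +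
        PowerSeries.X ^ (j + 1) * (1 - PowerSeries.X ^ (i + 1)) * h2

lemma two_mul_tri (m : ℕ) : 2 * (m * (m - 1) / 2) + m = m * m := by
  rw [Nat.mul_div_cancel' (Nat.even_mul_pred_self m).two_dvd]
  cases m <;> simp [Nat.mul_succ]

/-- The `q`-binomial theorem, in homogeneous form. -/
lemma qbinomial (y : PowerSeries (ZMod 11)) (N : ℕ) :
    ∏ i ∈ range N, (Polynomial.C y - Polynomial.C (PowerSeries.X ^ i) * Polynomial.X) =
    ∑ i ∈ range (N + 1), Polynomial.C
      ((-1) ^ i * PowerSeries.X ^ (i * (i - 1) / 2) * qb N i * y ^ (N - i)) * Polynomial.X ^ i := by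
  induction N with
  | zero => simp [qb_zero]
  | succ N ih =>
    rw [prod_range_succ, ih, sum_range_succ' _ (N + 1)]
    have h1 : ∀ i ∈ range (N + 1), Polynomial.C ((-1) ^ (i + 1) *
        PowerSeries.X ^ ((i + 1) * (i + 1 - 1) / 2) * qb (N + 1) (i + 1) *
          y ^ (N + 1 - (i + 1))) * Polynomial.X ^ (i + 1) =
        Polynomial.C ((-1) ^ (i + 1) * PowerSeries.X ^ ((i + 1) * (i + 1 - 1) / 2) *
          qb N (i + 1) * y ^ (N + 1 - (i + 1))) * Polynomial.X ^ (i + 1) -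
        Polynomial.C ((-1) ^ i * PowerSeries.X ^ (i * (i - 1) / 2) * qb N i * y ^ (N - i)) *
          Polynomial.X ^ i * (Polynomial.C (PowerSeries.X ^ N) * Polynomial.X) := by
      intro i hi
      have hi' : i ≤ N := by simpa [Nat.lt_succ_iff] using hi
      have hN : (PowerSeries.X : PowerSeries (ZMod 11)) ^ N =
          PowerSeries.X ^ i * PowerSeries.X ^ (N - i) := by
        rw [← pow_add, Nat.add_sub_cancel' hi']
      have hT : (i + 1) * (i + 1 - 1) / 2 = i * (i - 1) / 2 + i := by
        have := two_mul_tri (i + 1)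
        have := two_mul_tri i
        nlinarith
      rw [qb_succ, hN, hT, Nat.add_sub_add_right, pow_add PowerSeries.X]
      simp only [map_mul, map_add, map_pow, map_neg, map_one]
      ring
    have h2 : ∀ i ∈ range (N + 1), Polynomial.C ((-1) ^ i *
        PowerSeries.X ^ (i * (i - 1) / 2) * qb N i * y ^ (N + 1 - i)) * Polynomial.X ^ i =
        Polynomial.C ((-1) ^ i * PowerSeries.X ^ (i * (i - 1) / 2) * qb N i * y ^ (N - i)) *
          Polynomial.X ^ i * Polynomial.C y := by
      intro i hi
      have hi' : i ≤ N := by simpa [Nat.lt_succ_iff] using hi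
      rw [Nat.sub_add_comm hi', pow_succ]
      simp only [map_mul]
      ring
    have h3 := sum_range_succ' (fun i => Polynomial.C ((-1) ^ i *
      PowerSeries.X ^ (i * (i - 1) / 2) * qb N i * y ^ (N + 1 - i)) * Polynomial.X ^ i) (N + 1)
    rw [sum_range_succ, sum_congr rfl h2, qb_eq_zero (Nat.lt_succ_self N)] at h3
    rw [sum_congr rfl h1, sum_sub_distrib, ← sum_mul]
    rw [← sum_mul] at h3
    simp only [qb_zero] at h3 ⊢
    simp only [mul_zero, zero_mul, map_zero, add_zero] at h3
    linear_combination h3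

lemma qb_symm {n j : ℕ} (h : j ≤ n) : qb (2 * n + 1) (n + 1 + j) = qb (2 * n + 1) (n - j) := by
  have h1 := qb_mul (n + 1 + j) (n - j)
  have h2 := qb_mul (n - j) (n + 1 + j)
  rw [show n + 1 + j + (n - j) = 2 * n + 1 by omega] at h1
  rw [show n - j + (n + 1 + j) = 2 * n + 1 by omega] at h2
  refine ((poch_isUnit (n - j)).mul (poch_isUnit (n + 1 + j))).mul_right_cancel ?_
  linear_combination h1 - h2

open PowerSeries in
lemma prod_lower (n : ℕ) : ∏ i ∈ range n, ((X : PowerSeries (ZMod 11)) ^ n - X ^ i) =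
    (-1) ^ n * X ^ (n * (n - 1) / 2) * poch n := by
  have hc : (-1 : PowerSeries (ZMod 11)) ^ n = ∏ _i ∈ range n, (-1) := by simp
  rw [← prod_range_reflect, ← sum_range_id, ← sum_range_reflect, ← prod_pow_eq_pow_sum, poch,
    hc, ← prod_mul_distrib, ← prod_mul_distrib]
  refine prod_congr rfl fun i hi => ?_
  have hi' : i < n := by simpa using hi
  have hn : (X : PowerSeries (ZMod 11)) ^ n = X ^ (n - 1 - i) * X ^ (i + 1) := by
    rw [← pow_add]; congr 1; omega
  rw [hn]
  ring

open PowerSeries in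
lemma prod_upper (n : ℕ) : ∏ i ∈ range n, ((X : PowerSeries (ZMod 11)) ^ n - X ^ (n + (i + 1))) =
    X ^ (n * n) * poch n := by
  have hc : (X : PowerSeries (ZMod 11)) ^ (n * n) = ∏ _i ∈ range n, X ^ n := by
    simp [pow_mul]
  rw [hc, poch, ← prod_mul_distrib]
  exact prod_congr rfl fun i _ => by ring

/-- The finite form of Jacobi's identity. It is the `q`-binomial theorem with `N = 2 * n + 1`
and `y = X ^ n`, differentiated at the zero `1` of the product; the terms of index `n - j` and
`n + 1 + j` are combined. -/
lemma finite_jacobi (n : ℕ) : poch n ^ 2 =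
    ∑ j ∈ range (n + 1), (-1) ^ j * (2 * j + 1 : PowerSeries (ZMod 11)) *
      PowerSeries.X ^ (j * (j + 1) / 2) * qb (2 * n + 1) (n - j) := by
  have h := congrArg (fun f => Polynomial.eval 1 (Polynomial.derivative f))
    (qbinomial (PowerSeries.X ^ n) (2 * n + 1))
  have hl : ∏ i ∈ range (2 * n + 1), (Polynomial.C (PowerSeries.X ^ n : PowerSeries (ZMod 11)) -
      Polynomial.C (PowerSeries.X ^ i) * Polynomial.X) =
      (∏ i ∈ range n, (Polynomial.C (PowerSeries.X ^ n) -
        Polynomial.C (PowerSeries.X ^ i) * Polynomial.X)) *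
      (∏ i ∈ range n, (Polynomial.C (PowerSeries.X ^ n) -
        Polynomial.C (PowerSeries.X ^ (n + (i + 1))) * Polynomial.X)) *
      (Polynomial.C (PowerSeries.X ^ n) * (1 - Polynomial.X)) := by
    rw [show 2 * n + 1 = n + (n + 1) by ring, prod_range_add, prod_range_succ', add_zero]
    ring
  have hr : ∀ j ∈ range (n + 1),
      (fun i : ℕ => (-1) ^ i * PowerSeries.X ^ (i * (i - 1) / 2) * qb (2 * n + 1) i *
        (PowerSeries.X ^ n) ^ (2 * n + 1 - i) * (i : PowerSeries (ZMod 11))) (n + 1 - 1 - j) +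
      (fun i : ℕ => (-1) ^ i * PowerSeries.X ^ (i * (i - 1) / 2) * qb (2 * n + 1) i *
        (PowerSeries.X ^ n) ^ (2 * n + 1 - i) * (i : PowerSeries (ZMod 11))) (n + 1 + j) =
      -((-1) ^ n * PowerSeries.X ^ (n * (n - 1) / 2 + n * n + n)) *
        ((-1) ^ j * (2 * j + 1 : PowerSeries (ZMod 11)) *
          PowerSeries.X ^ (j * (j + 1) / 2) * qb (2 * n + 1) (n - j)) := by
    intro j hj
    have hj' : j ≤ n := by simpa [Nat.lt_succ_iff] using hj
    obtain ⟨d, rfl⟩ := Nat.exists_eq_add_of_le hj'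
    have t1 := two_mul_tri d
    have t2 := two_mul_tri (j + d)
    have t3 := two_mul_tri (j + d + 1 + j)
    have t4 := two_mul_tri (j + 1)
    rw [Nat.add_sub_cancel, mul_comm (j + 1)] at t4
    simp only [qb_symm hj', Nat.add_sub_cancel, Nat.add_sub_cancel_left, ← pow_mul]
    rw [show 2 * (j + d) + 1 - d = 2 * j + d + 1 by omega,
      show 2 * (j + d) + 1 - (j + d + 1 + j) = d by omega]
    have x1 : (PowerSeries.X : PowerSeries (ZMod 11)) ^ (d * (d - 1) / 2) *
        PowerSeries.X ^ ((j + d) * (2 * j + d + 1)) =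
        PowerSeries.X ^ ((j + d) * (j + d - 1) / 2 + (j + d) * (j + d) + (j + d)) *
          PowerSeries.X ^ (j * (j + 1) / 2) := by
      rw [← pow_add, ← pow_add]; congr 1; nlinarith
    have x2 : (PowerSeries.X : PowerSeries (ZMod 11)) ^
          ((j + d + 1 + j) * (j + d + 1 + j - 1) / 2) * PowerSeries.X ^ ((j + d) * d) =
        PowerSeries.X ^ ((j + d) * (j + d - 1) / 2 + (j + d) * (j + d) + (j + d)) *
          PowerSeries.X ^ (j * (j + 1) / 2) := by
      rw [← pow_add, ← pow_add]; congr 1; nlinarith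
    have s1 : (-1 : PowerSeries (ZMod 11)) ^ (j + d + 1 + j) = -(-1) ^ d := by
      rw [show j + d + 1 + j = 2 * j + (d + 1) by ring, pow_add, pow_mul, pow_succ (-1) d]; simp
    have s2 : (-1 : PowerSeries (ZMod 11)) ^ (j + d) * (-1) ^ j = (-1) ^ d := by
      rw [← pow_add, show j + d + j = 2 * j + d by ring, pow_add, pow_mul]; simp
    rw [s1]
    push_cast
    linear_combination (-1) ^ d * qb (2 * (j + d) + 1) d * (d * x1 - (j + d + 1 + j) * x2) +
      PowerSeries.X ^ ((j + d) * (j + d - 1) / 2 + (j + d) * (j + d) + (j + d)) *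
          PowerSeries.X ^ (j * (j + 1) / 2) * (2 * j + 1) * qb (2 * (j + d) + 1) d * s2
  simp only [hl, Polynomial.derivative_mul, Polynomial.derivative_sum, Polynomial.eval_add,
    Polynomial.eval_mul, Polynomial.eval_finsetSum, Polynomial.derivative_sub,
    Polynomial.derivative_C, Polynomial.derivative_X, Polynomial.derivative_one,
    Polynomial.derivative_X_pow, Polynomial.eval_sub, Polynomial.eval_prod, Polynomial.eval_C,
    Polynomial.eval_X, Polynomial.eval_one, Polynomial.eval_pow, Polynomial.eval_neg,
    prod_lower, prod_upper, one_pow, mul_one, sub_self, mul_zero, zero_mul, zero_add, zero_sub] at h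
  rw [show 2 * n + 1 + 1 = (n + 1) + (n + 1) by ring, sum_range_add, ← sum_range_reflect _ (n + 1),
    ← sum_add_distrib, sum_congr rfl hr, ← mul_sum] at h
  refine mul_left_cancel₀ (a := -((-1) ^ n *
    PowerSeries.X ^ (n * (n - 1) / 2 + n * n + n) : PowerSeries (ZMod 11))) (by simp) ?_
  rw [← h]
  ring

/-- Euler's product `∏ (1 - X ^ n)`, as the series of the pentagonal number theorem. -/
abbrev E : PowerSeries (ZMod 11) := PowerSeries.pentagonalSeries (ZMod 11)

open PowerSeries in
lemma dvd_poch_sub {k n : ℕ} (h : k ≤ n) : X ^ (k + 1) ∣ poch n - poch k := by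
  induction n, h using Nat.le_induction with
  | base => simp
  | succ n h ih =>
    rw [poch_succ, show poch n * (1 - X ^ (n + 1)) - poch k =
      (poch n - poch k) - X ^ (n + 1) * poch n by ring]
    exact dvd_sub ih (dvd_mul_of_dvd_left (pow_dvd_pow _ (by omega)) _)

open PowerSeries in
lemma dvd_E_sub_poch (k : ℕ) : X ^ (k + 1) ∣ E - poch k := by
  rw [X_pow_dvd_iff]
  intro m hm
  have h := (coeff_prod_one_sub_X_pow_eventually_eq (ZMod 11) m)
  obtain ⟨M, hM⟩ := Filter.eventually_atTop.mp (Filter.tendsto_finset_range.eventually h)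
  have h1 := hM (max M k) (le_max_left _ _)
  have h2 := X_pow_dvd_iff.mp (dvd_poch_sub (le_max_right M k)) m hm
  rw [map_sub, sub_eq_zero] at h2 ⊢
  rw [← h2, poch, h1]

lemma E_isUnit : IsUnit E := by
  have h := PowerSeries.X_pow_dvd_iff.mp (dvd_E_sub_poch 0) 0 (by norm_num)
  rw [poch_zero, map_sub, sub_eq_zero] at h
  rw [PowerSeries.isUnit_iff_constantCoeff, ← PowerSeries.coeff_zero_eq_constantCoeff_apply, h]
  simp

open PowerSeries in
/-- `[2 * n + 1, n - j]` agrees with `1 / E` up to the exponent `n - j`. -/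
lemma dvd_qb_mul_E {n j : ℕ} (h : j ≤ n) :
    X ^ (n - j + 1) ∣ qb (2 * n + 1) (n - j) * E - 1 := by
  have h0 := qb_mul (n - j) (n + j + 1)
  rw [show n - j + (n + j + 1) = 2 * n + 1 by omega] at h0
  have d1 := dvd_E_sub_poch (n - j)
  have d2 := (pow_dvd_pow X (by omega : n - j + 1 ≤ n + j + 1 + 1)).trans (dvd_E_sub_poch (n + j + 1))
  have d3 := (pow_dvd_pow X (by omega : n - j + 1 ≤ 2 * n + 1 + 1)).trans (dvd_E_sub_poch (2 * n + 1))
  rw [← E_isUnit.dvd_mul_left]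
  obtain ⟨u, hu⟩ := d1
  obtain ⟨v, hv⟩ := d2
  obtain ⟨w, hw⟩ := d3
  refine ⟨qb (2 * n + 1) (n - j) * (u * E + poch (n - j) * v) - w, ?_⟩
  linear_combination qb (2 * n + 1) (n - j) * (E * hu + poch (n - j) * hv) - hw + h0

open PowerSeries in
/-- Jacobi's identity for `E ^ 3`, up to the exponent `n`. -/
lemma dvd_jacobi (n : ℕ) : X ^ (n + 1) ∣ E ^ 3 - ∑ j ∈ range (n + 1),
    (-1) ^ j * (2 * j + 1 : PowerSeries (ZMod 11)) * X ^ (j * (j + 1) / 2) := by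
  have h : E ^ 3 - ∑ j ∈ range (n + 1),
      (-1) ^ j * (2 * j + 1 : PowerSeries (ZMod 11)) * X ^ (j * (j + 1) / 2) =
      (E - poch n) * (E * (E + poch n)) + ∑ j ∈ range (n + 1),
        (-1) ^ j * (2 * j + 1 : PowerSeries (ZMod 11)) *
          (X ^ (j * (j + 1) / 2) * (qb (2 * n + 1) (n - j) * E - 1)) := by
    have h' := congrArg (· * E) (finite_jacobi n)
    simp only [sum_mul] at h'
    simp only [mul_sub, mul_one, sum_sub_distrib, ← mul_assoc] at h' ⊢
    linear_combination h'
  rw [h]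
  refine dvd_add (dvd_mul_of_dvd_left (dvd_E_sub_poch n) _) (dvd_sum fun j hj => ?_)
  have hjn : j ≤ n := by simpa [Nat.lt_succ_iff] using hj
  refine dvd_mul_of_dvd_right ?_ _
  refine (pow_dvd_pow X ?_).trans ((pow_add X (j * (j + 1) / 2) (n - j + 1)).dvd.trans
    (mul_dvd_mul_left _ (dvd_qb_mul_E hjn)))
  -- the exponent is large enough because `j ≤ j * (j + 1) / 2`
  have : j ≤ j * (j + 1) / 2 := by
    rw [Nat.le_div_iff_mul_le (by norm_num)]
    nlinarith [Nat.le_mul_self j]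
  omega

/-- By Jacobi's identity only the exponents `m = j * (j + 1) / 2` occur in `E ^ 3`, with coefficient
`± (2 * j + 1)`, and `(2 * j + 1) ^ 2 = 8 * m + 1`. So `m` modulo 11 is one of `0, 1, 3, 6, 10`, or
it is `4` and the coefficient vanishes. -/
lemma coeff_E_cube {m : ℕ} (h : m % 11 ∈ ({2, 4, 5, 7, 8, 9} : Finset ℕ)) :
    (E ^ 3).coeff m = 0 := by
  have hd := PowerSeries.X_pow_dvd_iff.mp (dvd_jacobi m) m (by omega)
  rw [map_sub, sub_eq_zero] at hd
  rw [hd, map_sum]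
  refine sum_eq_zero fun j _ => ?_
  have hc : ((-1) ^ j * (2 * j + 1) : PowerSeries (ZMod 11)) =
      PowerSeries.C ((-1) ^ j * (2 * j + 1) : ZMod 11) := by
    simp only [map_mul, map_add, map_pow, map_neg, map_one, map_ofNat, map_natCast]
  rw [hc, PowerSeries.coeff_C_mul, PowerSeries.coeff_X_pow]
  split_ifs with hm
  · have h2 : 2 * m = j * (j + 1) := by
      rw [hm]; exact Nat.mul_div_cancel' (Nat.even_mul_succ_self j).two_dvd
    have h3 : ((2 * m : ℕ) : ZMod 11) = ((j * (j + 1) : ℕ) : ZMod 11) := by rw [h2]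
    have h4 : (m : ZMod 11) = ((m % 11 : ℕ) : ZMod 11) := by simp
    push_cast at h3
    rw [h4] at h3
    have h5 : (2 * j + 1 : ZMod 11) = 0 := by
      generalize (j : ZMod 11) = t at h3 ⊢
      generalize m % 11 = s at h h3
      fin_cases h <;> revert t <;> decide
    rw [h5]; simp
  · simp

/-- The residues modulo 11 that contain no generalized pentagonal number. -/
lemma coeff_E {m : ℕ} (h : m % 11 ∈ ({3, 6, 8, 9, 10} : Finset ℕ)) : E.coeff m = 0 := by
  refine PowerSeries.coeff_pentagonalSeries_eq_zero _ ?_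
  rintro ⟨k, hk⟩
  have h2 := two_mul_natCast_pentagonal k
  have h3 := congrArg (Int.cast : ℤ → ZMod 11) h2
  have h4 : (m : ZMod 11) = ((m % 11 : ℕ) : ZMod 11) := by simp
  rw [hk] at h3
  push_cast at h3
  rw [h4] at h3
  generalize (k : ZMod 11) = t at h3
  generalize m % 11 = s at h h3
  fin_cases h <;> revert t <;> decide

/-! ### Ramanujan's congruence modulo 11 -/

/-- With `K = E ^ 3`, the five vanishing components of `K ^ 4 = E ^ 11 * E` are quartic relations
between the components `J0, J1, J3, J6, J10` of `K`. The component of index 6 of `E ^ 21 = K ^ 7` is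
a form of degree 7 in them, and modulo 11 it lies in the ideal generated by the five relations. -/
lemma cmp_E_pow : cmp 6 (E ^ 21) = 0 := by
  obtain ⟨K, hK⟩ : ∃ K, K = E ^ 3 := ⟨_, rfl⟩
  have hz : ∀ r ∈ ({2, 4, 5, 7, 8, 9} : Finset ℕ), cmp r K = 0 := fun r hr =>
    cmp_eq_zero fun n hn => by rw [hK]; exact coeff_E_cube (by rwa [hn])
  have hR : ∀ r ∈ ({3, 6, 8, 9, 10} : Finset ℕ), cmp r (K * K * (K * K)) = 0 := by
    intro r hr
    rw [hK, show E ^ 3 * E ^ 3 * (E ^ 3 * E ^ 3) = E ^ 11 * E by ring,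
      cmp_pow_eleven_mul (by fin_cases hr <;> norm_num),
      cmp_eq_zero fun n hn => coeff_E (by rwa [hn]), mul_zero]
  have z2 := hz 2 (by decide)
  have z4 := hz 4 (by decide)
  have z5 := hz 5 (by decide)
  have z7 := hz 7 (by decide)
  have z8 := hz 8 (by decide)
  have z9 := hz 9 (by decide)
  have h3 := hR 3 (by decide)
  have h6 := hR 6 (by decide)
  have h8 := hR 8 (by decide)
  have h9 := hR 9 (by decide)
  have h10 := hR 10 (by decide)
  have h11 : (11 : PowerSeries (ZMod 11)) = 0 := by
    rw [show (11 : PowerSeries (ZMod 11)) = PowerSeries.C (11 : ZMod 11) from (map_ofNat _ 11).symm,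
      show (11 : ZMod 11) = 0 from rfl, map_zero]
  rw [show E ^ 21 = K * K * (K * K) * (K * K * K) by rw [hK]; ring]
  simp only [cmp_mul, sum_range_succ, sum_range_zero, Nat.reduceLT, Nat.reduceMul, Nat.reduceAdd,
    Nat.reduceMod, z2, z4, z5, z7, z8, z9, mul_zero, zero_mul, add_zero, zero_add]
    at h3 h6 h8 h9 h10 ⊢
  generalize cmp 0 K = J0 at *
  generalize cmp 1 K = J1 at *
  generalize cmp 3 K = J3 at *
  generalize cmp 6 K = J6 at *
  generalize cmp 10 K = J10 at *
  -- the cubic cofactors show the membership; the last summand collects the multiples of 11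
  linear_combination (10*J1*J3*J10 + 10*J1^3 + 4*J0^2*J3) * h3
    + (4*J6^2*J10 + 10*J0*J1*J10 + 10*J0^3) * h6
    + (10*J3^3 + 4*J0*J10^2 + 10*J0*J3*J6) * h8
    + (10*J10^3 + 10*J3*J6*J10 + 4*J1^2*J6) * h9
    + (10*J6^3 + 4*J1*J3^2 + 10*J0*J1*J6) * h10
    + ((-3)*J0^6*J6 - (5)*J0^5*J3^2 - (10)*J0^4*J1*J6*J10 + (4)*J0^3*J1^3*J3 +
      (8)*J0^3*J1*J3^2*J10 + (4)*J0^3*J6^3*J10 + (18)*J0^2*J1^2*J3*J6^2 +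
      (18)*J0^2*J1^2*J6*J10^2 + (18)*J0^2*J3^2*J6^2*J10 + (8)*J0^2*J3*J6*J10^3 +
      (-5)*J0^2*J10^5 - (3)*J0*J1^6 - (10)*J0*J1^4*J3*J10 + (8)*J0*J1^2*J3^3*J6 +
      (18)*J0*J1^2*J3^2*J10^2 - (10)*J0*J1*J3*J6^4 + (8)*J0*J1*J6^3*J10^2 +
      (-10)*J0*J3^4*J6*J10 + (4)*J0*J3^3*J10^3 - (5)*J1^5*J6^2 + (8)*J1^3*J3*J6^2*J10 +
      (4)*J1^3*J6*J10^3 - (5)*J1^2*J3^5 + (4)*J1*J3^3*J6^3 + (18)*J1*J3^2*J6^2*J10^2 +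
      (-10)*J1*J3*J6*J10^4 - (3)*J1*J10^6 - (3)*J3^6*J10 - (3)*J3*J6^6 +
      (-5)*J6^5*J10^2) * h11

open PowerSeries PowerSeries.WithPiTopology in
/-- Euler's generating function for the partition numbers, modulo 11. -/
lemma partitions_mul_E :
    (PowerSeries.mk fun n => (numPartitions n : ZMod 11)) * E = 1 := by
  let _ : TopologicalSpace (ZMod 11) := ⊥
  have _ : DiscreteTopology (ZMod 11) := ⟨rfl⟩
  have h1 := Nat.Partition.hasProd_powerSeriesMk_card_restricted (ZMod 11) (fun _ => True)
  have h2 := h1.mul (hasProd_one_sub_X_pow (ZMod 11))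
  have h3 : (fun n => (#(Nat.Partition.restricted n fun _ => True) : ZMod 11)) =
      fun n => (numPartitions n : ZMod 11) := by
    ext n
    simp [Nat.Partition.restricted, numPartitions]
  rw [h3] at h2
  refine h2.unique ?_
  convert hasProd_one with i
  rw [if_pos trivial]
  simp_rw [pow_mul]
  exact tsum_pow_mul_one_sub_of_constantCoeff_eq_zero (by simp)

/-- Ramanujan's congruence modulo 11. -/
lemma eleven_dvd_numPartitions {k : ℕ} (hk : k % 11 = 6) : (11 : ℤ) ∣ numPartitions k := by
  have h : (E ^ 2) ^ 11 * (PowerSeries.mk fun n => (numPartitions n : ZMod 11)) = E ^ 21 := by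
    linear_combination E ^ 21 * partitions_mul_E
  have h' := congrArg (cmp 6) h
  rw [cmp_pow_eleven_mul (by norm_num), cmp_E_pow] at h'
  have h0 := (mul_eq_zero.mp h').resolve_left ((E_isUnit.pow 2).pow 11).ne_zero
  have hc := congrArg (PowerSeries.coeff k) h0
  rw [coeff_cmp, if_pos hk, PowerSeries.coeff_mk, map_zero] at hc
  exact_mod_cast (ZMod.natCast_eq_zero_iff _ 11).mp hc

end Mod11

theorem stmt7 (J N : ℕ) :
    (11 : ℤ) ∣ MO1 (11 * J + 10) (11 * N + 7) := by
  refine dvd_sum fun kn hkn => ?_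
  obtain ⟨k, n⟩ := kn
  replace hkn : 3 * k + n * (n + 1) / 2 = 11 * N + 7 := (mem_filter.mp hkn).2
  by_cases hn : n % 11 = 0 ∨ n % 11 = 10
  · refine dvd_mul_of_dvd_left (Mod11.eleven_dvd_numPartitions ?_) _
    -- here 11 divides the triangular number, so `3 * k ≡ 7`, that is `k ≡ 6` modulo 11
    have h2 : 2 * (n * (n + 1) / 2) = n * (n + 1) :=
      Nat.mul_div_cancel' (Nat.even_mul_succ_self n).two_dvd
    have h11 : 11 ∣ n * (n + 1) := by
      rcases hn with hn | hn
      · exact dvd_mul_of_dvd_left (by omega) _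
      · exact dvd_mul_of_dvd_right (by omega) _
    omega
  · push Not at hn
    exact dvd_mul_of_dvd_right (Mod11.eleven_dvd_c1 hn.1 hn.2) _
end
end

section
/- For all integers J ≥ 0 and N ≥ 0, MO(2, 9J+4; 27N+9) ≡ 0 (mod 3) and MO(2, 9J+7; 27N) ≡ 0 (mod 3). -/
/-!
By Lucas's theorem modulo `3`, `C(n+t, 2t)` vanishes unless `n ≡ 4 (mod 9)` when `t = 9J+4`, and
unless `n ≡ 1, 7 (mod 9)` when `t = 9J+7`. For the remaining `n`, the triangular number `n(n+1)/2`
is `10`, respectively `1`, modulo `27`, so the complementary index `k = N' - n(n+1)/2`, with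
`N' = 27N+9` or `N' = 27N`, is `26` modulo `27`. Every term therefore vanishes modulo `3` once
`pod(27n+26) ≡ 0 (mod 3)` is known (`pod_eq_zero`).

For that congruence let `ψ = ∑ q^{s(s+1)/2}` and `D = ∑ (-1)^k pod(k) q^k`, over `ZMod 3`. The
product formula for `D` and Gauss's identity for `ψ` give `ψ D = 1` (`psi_mul_D`); Gauss's identity
is the limit of a finite identity due to Shanks (`shanks`). Triangular numbers modulo `3` give
`ψ = A(q³) + q ψ(q⁹)`, and Frobenius gives `f³ = f(q³)`. Write `U` for the operator that keeps the
coefficients of exponents `3n+2`; it satisfies `U(g(q³) f) = g U(f)`, `U(ψ) = 0` and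
`U(ψ²) = ψ(q³)²`. From `1/ψ = ψ²/ψ(q³)` follow `U(D) = ψ(q³)²/ψ = ψ(q³) ψ²`,
`U²(D) = ψ ψ(q³)²` and `U³(D) = U(ψ) ψ² = 0` (`sec_sec_sec_D`), which is the congruence.
-/

open Finset

noncomputable section

/-! ### A finite form of Gauss's triangular-number identity -/

namespace PodMod3

open PowerSeries

theorem inv_one_sub (k : ℕ) : (1 - (X : (ZMod 3)⟦X⟧) ^ (k + 1)) * (1 - X ^ (k + 1))⁻¹ = 1 := by
  apply PowerSeries.mul_inv_cancel
  simp

/-- The finite product `∏_{i=1}^{n} (1 - X^{2i}) / (1 - X^{2i-1})` over `ZMod 3`; it tends to Gauss's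
product for `∑ X^{s(s+1)/2}`. -/
def P : ℕ → (ZMod 3)⟦X⟧
  | 0 => 1
  | n + 1 => P n * ((1 - X ^ (2 * n + 1 + 1)) * (1 - X ^ (2 * n + 1))⁻¹)

/-- The inverse of `P n`, namely `∏_{i=1}^{n} (1 - X^{2i-1}) / (1 - X^{2i})`. -/
def R : ℕ → (ZMod 3)⟦X⟧
  | 0 => 1
  | n + 1 => R n * ((1 - X ^ (2 * n + 1)) * (1 - X ^ (2 * n + 1 + 1))⁻¹)

theorem P_mul_R (n : ℕ) : P n * R n = 1 := by
  induction n with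
  | zero => simp [P, R]
  | succ n ih =>
    have h1 := inv_one_sub (2 * n)
    have h2 := inv_one_sub (2 * n + 1)
    rw [P, R]
    linear_combination ih * ((1 - X ^ (2 * n + 1)) * (1 - X ^ (2 * n + 1))⁻¹ *
        ((1 - X ^ (2 * n + 1 + 1)) * (1 - X ^ (2 * n + 1 + 1))⁻¹)) +
      h1 * ((1 - X ^ (2 * n + 1 + 1)) * (1 - X ^ (2 * n + 1 + 1))⁻¹) + h2

theorem P_succ (n : ℕ) : P (n + 1) * (1 - X ^ (2 * n + 1)) = P n * (1 - X ^ (2 * n + 2)) := by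
  rw [P]
  linear_combination P n * (1 - X ^ (2 * n + 2)) * inv_one_sub (2 * n)

theorem R_succ (n : ℕ) : R (n + 1) * (1 - X ^ (2 * n + 2)) = R n * (1 - X ^ (2 * n + 1)) := by
  rw [R]
  linear_combination R n * (1 - X ^ (2 * n + 1)) * inv_one_sub (2 * n + 1)

theorem tri_succ (s : ℕ) : (s + 1) * (s + 1 + 1) / 2 = s * (s + 1) / 2 + (s + 1) := by
  have : (s + 1) * (s + 1 + 1) = s * (s + 1) + (s + 1) * 2 := by ring
  rw [this, Nat.add_mul_div_right _ _ (by norm_num)]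

theorem tri_two_mul (n : ℕ) : (2 * n) * (2 * n + 1) / 2 = n * (2 * n + 1) := by
  rw [mul_assoc, Nat.mul_div_cancel_left _ (by norm_num)]

/-- Shanks's finite form of Gauss's triangular-number identity. On the left only the term `s = 0`,
which is `P n`, has a nonzero coefficient in degrees up to `2n`. -/
theorem shanks (n : ℕ) :
    ∑ s ∈ range n, P n * R s * X ^ (s * (2 * n + 1)) =
      ∑ s ∈ range (2 * n), (X : (ZMod 3)⟦X⟧) ^ (s * (s + 1) / 2) := by
  induction n with
  | zero => simp
  | succ n ih =>
    have hne : (1 - (X : (ZMod 3)⟦X⟧) ^ (2 * n + 1)) ≠ 0 :=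
      left_ne_zero_of_mul_eq_one (inv_one_sub (2 * n))
    apply mul_left_cancel₀ hne
    -- The summand for `n + 1` minus the summand for `n` telescopes in `s`, with certificate
    -- `X ^ (s * (2 * n + 1)) * (1 - X ^ (2 * s)) * R s`.
    have key : ∀ s, (1 - X ^ (2 * n + 1)) * (P (n + 1) * R s * X ^ (s * (2 * (n + 1) + 1))) =
        (1 - X ^ (2 * n + 1)) * (P n * R s * X ^ (s * (2 * n + 1))) +
        P n * (X ^ ((s + 1) * (2 * n + 1)) * (1 - X ^ (2 * (s + 1))) * R (s + 1) -
          X ^ (s * (2 * n + 1)) * (1 - X ^ (2 * s)) * R s) := by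
      intro s
      have e1 : (X : (ZMod 3)⟦X⟧) ^ (s * (2 * (n + 1) + 1)) = X ^ (s * (2 * n + 1)) * X ^ (2 * s) := by
        ring
      have hP := P_succ n
      have hR := R_succ s
      rw [e1]
      linear_combination hP * (R s * (X ^ (s * (2 * n + 1)) * X ^ (2 * s)))
        - hR * (P n * X ^ ((s + 1) * (2 * n + 1)))
    rw [show 2 * (n + 1) = 2 * n + 1 + 1 by ring, sum_range_succ _ (2 * n + 1),
      sum_range_succ _ (2 * n), ← ih, show 2 * n + 1 + 1 = 2 * (n + 1) by ring,
      mul_sum, sum_congr rfl (fun s _ => key s), sum_add_distrib, ← mul_sum, ← mul_sum,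
      sum_range_sub (fun s => X ^ (s * (2 * n + 1)) * (1 - X ^ (2 * s)) * R s), sum_range_succ,
      show (2 * n + 1) * (2 * (n + 1)) / 2 = n * (2 * n + 1) + (2 * n + 1) by
        rw [show 2 * (n + 1) = 2 * n + 1 + 1 by ring, tri_succ, tri_two_mul],
      tri_two_mul]
    have hPR := P_mul_R n
    have hR := R_succ n
    simp only [mul_zero, pow_zero, sub_self, zero_mul, sub_zero]
    linear_combination P n * X ^ ((n + 1) * (2 * n + 1)) * hR +
      (1 - X ^ (2 * n + 1)) * (1 + X ^ (2 * n + 1)) * X ^ (n * (2 * n + 1)) * hPR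

/-! ### The theta function and the generating function of `pod` -/

open scoped Classical in
/-- Ramanujan's theta function `ψ = ∑ X^{s(s+1)/2}` over `ZMod 3`. It is encoded as the indicator
series of the triangular numbers, which is the same because `s ↦ s(s+1)/2` is injective. -/
def psi : (ZMod 3)⟦X⟧ :=
  PowerSeries.mk fun d => if ∃ s : ℕ, s * (s + 1) / 2 = d then 1 else 0

theorem tri_strictMono : StrictMono fun s : ℕ => s * (s + 1) / 2 :=
  strictMono_nat_of_lt_succ fun s => by rw [tri_succ]; omega

theorem coeff_P {n d : ℕ} (h : d < n) : coeff d (P n) = coeff d psi := by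
  obtain ⟨m, rfl⟩ : ∃ m, n = m + 1 := ⟨n - 1, by omega⟩
  have hs := congrArg (coeff d) (shanks (m + 1))
  rw [sum_range_succ', map_add, map_sum, sum_eq_zero, zero_add] at hs
  · simp only [R, zero_mul, pow_zero, mul_one] at hs
    rw [hs, map_sum, psi, coeff_mk]
    simp only [coeff_X_pow]
    split_ifs with hd
    · obtain ⟨s, rfl⟩ := hd
      have hle : s ≤ s * (s + 1) / 2 := tri_strictMono.le_apply
      rw [sum_eq_single s]
      · simp
      · intro b _ hb
        rw [if_neg]
        intro hbs
        exact hb (tri_strictMono.injective hbs.symm)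
      · intro hns
        exact absurd (mem_range.2 (by omega)) hns
    · apply sum_eq_zero
      intro s _
      rw [if_neg]
      rintro rfl
      exact hd ⟨s, rfl⟩
  · intro s _
    rw [coeff_mul_X_pow', if_neg]
    nlinarith

/-- The series `∑ (-1)^k pod(k) X^k` over `ZMod 3`. -/
def D : (ZMod 3)⟦X⟧ := PowerSeries.mk fun k => (-1) ^ k * (pod k : ZMod 3)

/-- Local weights with `Nat.Partition.genFun w = D`: a part `i` of multiplicity `c ≥ 1` contributes
`(-1)^{ic}` if it is even or has `c = 1`, and `0` if it is a repeated odd part. The value at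
`c = 0` is never used. -/
def w (i c : ℕ) : ZMod 3 := if Odd i then (if c = 1 then -1 else 0) else 1

theorem prod_w {k : ℕ} (p : Nat.Partition k)
    [Decidable (∀ i ∈ p.parts, Odd i → p.parts.count i ≤ 1)] :
    p.parts.toFinsupp.prod w =
      if ∀ i ∈ p.parts, Odd i → p.parts.count i ≤ 1 then (-1) ^ k else 0 := by
  simp only [Finsupp.prod, Multiset.toFinsupp_support, Multiset.toFinsupp_apply]
  split_ifs with h
  · have hk : (-1 : ZMod 3) ^ k = ∏ i ∈ p.parts.toFinset, (-1) ^ (p.parts.count i * i) := by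
      rw [prod_pow_eq_pow_sum]
      congr 1
      conv_lhs => rw [← p.parts_sum, Finset.sum_multiset_count]
      simp
    rw [hk]
    apply prod_congr rfl
    intro i hi
    rw [Multiset.mem_toFinset] at hi
    have hpos := Multiset.count_pos.2 hi
    unfold w
    split_ifs with h1 h2
    · rw [h2, one_mul, h1.neg_one_pow]
    · have := h i hi h1
      omega
    · rw [Nat.not_odd_iff_even] at h1
      rw [(h1.mul_left _).neg_one_pow]
  · push Not at h
    obtain ⟨i, hi, ho, hc⟩ := h
    apply prod_eq_zero (Multiset.mem_toFinset.2 hi)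
    simp [w, ho, hc.ne']

theorem genFun_w : Nat.Partition.genFun w = D := by
  classical
  ext k
  rw [Nat.Partition.coeff_genFun, D, coeff_mk]
  simp only [prod_w]
  rw [pod, Nat.card_eq_fintype_card, Fintype.card_subtype, ← sum_filter, sum_const,
    nsmul_eq_mul, mul_comm]

open scoped PowerSeries.WithPiTopology

/-- The Euler factor of `D` at an odd part; `Nat.Partition.hasProd_genFun` supplies factors in this
form. -/
theorem term_odd (m : ℕ) :
    (1 : (ZMod 3)⟦X⟧) + ∑' j, w (2 * m + 1) (j + 1) • X ^ ((2 * m + 1) * (j + 1)) =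
      1 - X ^ (2 * m + 1) := by
  rw [tsum_eq_single 0]
  · simp [w, sub_eq_add_neg]
  · intro j hj
    simp [w, hj]

/-- The Euler factor of `D` at an even part. -/
theorem term_even (m : ℕ) :
    (1 : (ZMod 3)⟦X⟧) + ∑' j, w (2 * m + 1 + 1) (j + 1) • X ^ ((2 * m + 1 + 1) * (j + 1)) =
      (1 - X ^ (2 * m + 1 + 1))⁻¹ := by
  have hc : constantCoeff ((X : (ZMod 3)⟦X⟧) ^ (2 * m + 1 + 1)) = 0 := by simp
  have key := WithPiTopology.tsum_pow_mul_one_sub_of_constantCoeff_eq_zero hc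
  rw [(WithPiTopology.summable_pow_of_constantCoeff_eq_zero hc).tsum_eq_zero_add, pow_zero] at key
  have hw : ¬ Odd (2 * m + 1 + 1) := by
    rw [Nat.not_odd_iff_even]; exact ⟨m + 1, by ring⟩
  rw [PowerSeries.eq_inv_iff_mul_eq_one (by simp)]
  simp only [w, hw, if_false, one_smul, pow_mul]
  simpa only [pow_mul] using key

theorem tendsto_R : Filter.Tendsto R Filter.atTop (nhds D) := by
  have h := (Nat.Partition.hasProd_genFun w).tendsto_prod_nat
  rw [genFun_w] at h
  have h2 := h.comp (Filter.tendsto_id.const_mul_atTop' (two_pos : 0 < 2))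
  convert h2 using 1
  funext n
  simp only [Function.comp, id]
  induction n with
  | zero => simp [R]
  | succ n ih =>
    rw [show 2 * (n + 1) = 2 * n + 1 + 1 by ring, prod_range_succ, prod_range_succ, ← ih,
      term_odd, term_even, R, mul_assoc]

theorem tendsto_P : Filter.Tendsto P Filter.atTop (nhds psi) := by
  rw [WithPiTopology.tendsto_iff_coeff_tendsto]
  intro d
  apply tendsto_atTop_of_eventually_const (i₀ := d + 1)
  intro n hn
  exact coeff_P hn

/-- Gauss's identity combined with the product formula for `pod`: `∑ (-1)^k pod(k) X^k = 1 / ψ`. -/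
theorem psi_mul_D : psi * D = 1 := by
  refine tendsto_nhds_unique (tendsto_P.mul tendsto_R) ?_
  simp only [P_mul_R]
  exact tendsto_const_nhds

/-! ### Trisection modulo 3 -/

/-- The substitution `X ↦ X³`. -/
abbrev e3 : (ZMod 3)⟦X⟧ →ₐ[ZMod 3] (ZMod 3)⟦X⟧ := expand 3 (by norm_num)

/-- Frobenius: `f(X³) = f(X)³` over `ZMod 3`. -/
theorem e3_eq (f : (ZMod 3)⟦X⟧) : e3 f = f ^ 3 := by
  have h := MvPowerSeries.map_frobenius_expand 3 (by norm_num) (f := f) (R := ZMod 3)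
  rw [ZMod.frobenius_zmod] at h
  rw [← h, MvPowerSeries.map_id]
  rfl

/-- The section `∑ f_{3n+r} Xⁿ` of a power series `f = ∑ f_n Xⁿ`. -/
def sec (r : ℕ) (f : (ZMod 3)⟦X⟧) : (ZMod 3)⟦X⟧ := PowerSeries.mk fun n => coeff (3 * n + r) f

theorem coeff_e3 (f : (ZMod 3)⟦X⟧) (n : ℕ) :
    coeff n (e3 f) = if 3 ∣ n then coeff (n / 3) f else 0 := coeff_expand ..

theorem coeff_dissect (a b c : (ZMod 3)⟦X⟧) (n : ℕ) :
    coeff n (e3 a + X * e3 b + X ^ 2 * e3 c) =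
      if n % 3 = 0 then coeff (n / 3) a else if n % 3 = 1 then coeff (n / 3) b
        else coeff (n / 3) c := by
  rw [← pow_one (X : (ZMod 3)⟦X⟧), ← pow_mul, map_add, map_add, coeff_X_pow_mul',
    coeff_X_pow_mul']
  simp only [coeff_e3]
  split_ifs <;> first
    | (exfalso; omega)
    | (simp only [add_zero, zero_add]; try (congr 2; omega))

theorem dissect (f : (ZMod 3)⟦X⟧) :
    f = e3 (sec 0 f) + X * e3 (sec 1 f) + X ^ 2 * e3 (sec 2 f) := by
  ext n
  rw [coeff_dissect]
  simp only [sec, coeff_mk]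
  split_ifs
  all_goals congr 2; omega

theorem sec_two_dissect (a b c : (ZMod 3)⟦X⟧) :
    sec 2 (e3 a + X * e3 b + X ^ 2 * e3 c) = c := by
  ext n
  rw [sec, coeff_mk, coeff_dissect, if_neg (by omega), if_neg (by omega)]
  congr 2
  omega

theorem sec_two_mul (g f : (ZMod 3)⟦X⟧) : sec 2 (e3 g * f) = g * sec 2 f := by
  conv_lhs => rw [dissect f]
  rw [← sec_two_dissect (g * sec 0 f) (g * sec 1 f) (g * sec 2 f)]
  simp only [map_mul]
  congr 1
  ring

theorem two_mul_tri (s : ℕ) : 2 * (s * (s + 1) / 2) = s * (s + 1) :=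
  Nat.mul_div_cancel' (Nat.even_mul_succ_self s).two_dvd

theorem tri_three_mul_add_one (m : ℕ) :
    (3 * m + 1) * (3 * m + 1 + 1) / 2 = 9 * (m * (m + 1) / 2) + 1 := by
  have hs := two_mul_tri (3 * m + 1)
  have ht := two_mul_tri m
  have : 2 * ((3 * m + 1) * (3 * m + 1 + 1) / 2) = 18 * (m * (m + 1) / 2) + 2 := by
    linear_combination hs - 9 * ht
  omega

theorem tri_mod_three (s : ℕ) :
    s * (s + 1) / 2 % 3 = 0 ∨
      ∃ m, s = 3 * m + 1 ∧ s * (s + 1) / 2 = 9 * (m * (m + 1) / 2) + 1 := by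
  obtain ⟨m, hm⟩ : ∃ m, s = 3 * m ∨ s = 3 * m + 1 ∨ s = 3 * m + 2 := ⟨s / 3, by omega⟩
  rcases hm with rfl | rfl | rfl
  · left
    have hs := two_mul_tri (3 * m)
    have ht := two_mul_tri m
    have : 2 * (3 * m * (3 * m + 1) / 2) + 6 * m = 18 * (m * (m + 1) / 2) := by
      linear_combination hs - 9 * ht
    omega
  · exact Or.inr ⟨m, rfl, tri_three_mul_add_one m⟩
  · left
    have hs := two_mul_tri (3 * m + 2)
    have ht := two_mul_tri m
    have : 2 * ((3 * m + 2) * (3 * m + 2 + 1) / 2) = 18 * (m * (m + 1) / 2) + 6 * m + 6 := by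
      linear_combination hs - 9 * ht
    omega

/-- No triangular number is `2` modulo `3`. -/
theorem sec_two_psi : sec 2 psi = 0 := by
  ext n
  rw [sec, coeff_mk, psi, coeff_mk, if_neg, map_zero]
  rintro ⟨s, hs⟩
  obtain h | ⟨m, -, h⟩ := tri_mod_three s <;> omega

/-- The triangular numbers that are `1` modulo `3` are exactly the numbers `9T + 1` with `T`
triangular. -/
theorem sec_one_psi : sec 1 psi = e3 psi := by
  ext n
  rw [sec, coeff_mk, coeff_e3, psi, coeff_mk, coeff_mk, ← ite_and]
  congr 1
  apply propext
  constructor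
  · rintro ⟨s, hs⟩
    obtain h | ⟨m, -, h⟩ := tri_mod_three s
    · omega
    · exact ⟨by omega, m, by omega⟩
  · rintro ⟨hn, m, hm⟩
    refine ⟨3 * m + 1, ?_⟩
    rw [tri_three_mul_add_one]
    omega

theorem sec_two_psi_sq : sec 2 (psi ^ 2) = e3 psi ^ 2 := by
  have h := dissect psi
  rw [sec_two_psi, sec_one_psi, map_zero, mul_zero, add_zero] at h
  rw [← sec_two_dissect (sec 0 psi ^ 2) (2 * sec 0 psi * e3 psi) (e3 psi ^ 2)]
  conv_lhs => rw [h]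
  simp only [map_mul, map_pow, map_ofNat]
  congr 1
  ring

/-- The three sections pick out the exponents `3(3(3n+2)+2)+2 = 27n+26`. -/
theorem sec_sec_sec_D : sec 2 (sec 2 (sec 2 D)) = 0 := by
  have h := psi_mul_D
  -- `1/ψ = ψ²/ψ³ = ψ²/ψ(X³)`.
  have h1 : D = e3 D * psi ^ 2 := by
    rw [e3_eq]
    linear_combination -D * (psi * D + 1) * h
  -- The section of `1/ψ` is `ψ(X³)²/ψ = ψ⁶/ψ = ψ⁵ = ψ(X³)ψ²`.
  have h2 : sec 2 D = e3 psi * psi ^ 2 := by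
    conv_lhs => rw [h1]
    rw [sec_two_mul, sec_two_psi_sq, e3_eq]
    linear_combination psi ^ 5 * h
  have h3 : sec 2 (sec 2 D) = e3 (psi ^ 2) * psi := by
    rw [h2, sec_two_mul, sec_two_psi_sq, map_pow, mul_comm]
  rw [h3, sec_two_mul, sec_two_psi, mul_zero]

/-- `pod(27n+26) ≡ 0 (mod 3)`. -/
theorem pod_eq_zero {k : ℕ} (hk : k % 27 = 26) : (-1) ^ k * (pod k : ZMod 3) = 0 := by
  have h := congrArg (coeff (k / 27)) sec_sec_sec_D
  simp only [sec, coeff_mk, map_zero] at h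
  rw [show 3 * (3 * (3 * (k / 27) + 2) + 2) + 2 = k by omega, D, coeff_mk] at h
  exact h

/-! ### Binomial coefficients and triangular numbers -/

/-- Lucas's theorem modulo `3` with the two lowest ternary digits split off. -/
theorem lucas_two (n k : ℕ) : (n.choose k : ZMod 3) =
    ((n % 3).choose (k % 3) : ℕ) * (((n / 3 % 3).choose (k / 3 % 3) : ℕ) *
      ((n / 3 / 3).choose (k / 3 / 3) : ℕ)) := by
  have key (a b : ℕ) : (a.choose b : ZMod 3) =
      ((a % 3).choose (b % 3) : ℕ) * ((a / 3).choose (b / 3) : ℕ) := by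
    rw [← Nat.cast_mul, ZMod.natCast_eq_natCast_iff]
    exact Choose.choose_modEq_choose_mod_mul_choose_div_nat
  rw [key n k, key (n / 3) (k / 3)]

/-- The two lowest ternary digits of `2(9J+4)` are `22`, so the binomial coefficient
vanishes unless those of `n + 9J + 4` are `22` too. -/
theorem choose_eq_zero_left (J n : ℕ) (hn : n % 9 ≠ 4) :
    ((n + (9 * J + 4)).choose (2 * (9 * J + 4)) : ZMod 3) = 0 := by
  rw [lucas_two]
  by_cases h : n % 3 = 1
  · rw [Nat.choose_eq_zero_of_lt
      (show (n + (9 * J + 4)) / 3 % 3 < 2 * (9 * J + 4) / 3 % 3 by omega)]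
    simp
  · rw [Nat.choose_eq_zero_of_lt
      (show (n + (9 * J + 4)) % 3 < 2 * (9 * J + 4) % 3 by omega)]
    simp

/-- The two lowest ternary digits of `2(9J+7)` are `12`, so the binomial coefficient
vanishes unless those of `n + 9J + 7` are `12` or `22`. -/
theorem choose_eq_zero_right (J n : ℕ) (hn : n % 9 ≠ 1) (hn' : n % 9 ≠ 7) :
    ((n + (9 * J + 7)).choose (2 * (9 * J + 7)) : ZMod 3) = 0 := by
  rw [lucas_two]
  by_cases h : n % 3 = 1
  · rw [Nat.choose_eq_zero_of_lt
      (show (n + (9 * J + 7)) / 3 % 3 < 2 * (9 * J + 7) / 3 % 3 by omega)]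
    simp
  · rw [Nat.choose_eq_zero_of_lt
      (show (n + (9 * J + 7)) % 3 < 2 * (9 * J + 7) % 3 by omega)]
    simp

theorem tri_mod_left {n : ℕ} (hn : n % 9 = 4) : n * (n + 1) / 2 % 27 = 10 := by
  obtain ⟨m, rfl⟩ : ∃ m, n = 3 * (3 * m + 1) + 1 := ⟨n / 9, by omega⟩
  rw [tri_three_mul_add_one, tri_three_mul_add_one]
  omega

theorem tri_mod_right {n : ℕ} (hn : n % 9 = 1 ∨ n % 9 = 7) : n * (n + 1) / 2 % 27 = 1 := by
  obtain ⟨m, rfl⟩ : ∃ m, n = 3 * m + 1 := ⟨n / 3, by omega⟩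
  rw [tri_three_mul_add_one]
  obtain h | ⟨l, hl, -⟩ := tri_mod_three m <;> omega

/-- `MO2 t N` is divisible by `3` termwise as soon as every pair `(k, n)` in its range has
`k ≡ 26 (mod 27)` or a binomial coefficient divisible by `3`. -/
theorem dvd_MO2 {t N : ℕ}
    (h : ∀ k n, k + n * (n + 1) / 2 = N →
      k % 27 = 26 ∨ ((n + t).choose (2 * t) : ZMod 3) = 0) : (3 : ℤ) ∣ MO2 t N := by
  refine (ZMod.intCast_zmod_eq_zero_iff_dvd _ 3).1 ?_
  rw [MO2, Int.cast_sum]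
  apply sum_eq_zero
  rintro ⟨k, n⟩ hkn
  push_cast
  obtain hk | hc := h k n (mem_filter.1 hkn).2
  · rw [pod_eq_zero hk, zero_mul]
  · rw [hc, mul_zero]

end PodMod3

theorem stmt12 (J N : ℕ) :
    (3 : ℤ) ∣ MO2 (9 * J + 4) (27 * N + 9) ∧ (3 : ℤ) ∣ MO2 (9 * J + 7) (27 * N) := by
  constructor
  · refine PodMod3.dvd_MO2 fun k n hkn => ?_
    by_cases hn : n % 9 = 4
    · have := PodMod3.tri_mod_left hn
      left; omega
    · exact Or.inr (PodMod3.choose_eq_zero_left J n hn)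
  · refine PodMod3.dvd_MO2 fun k n hkn => ?_
    by_cases hn : n % 9 = 1 ∨ n % 9 = 7
    · have := PodMod3.tri_mod_right hn
      left; omega
    · push Not at hn
      exact Or.inr (PodMod3.choose_eq_zero_right J n hn.1 hn.2)
end
end
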